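/- arXiv:2102.01621 — 7 statements merged into one kernel-verified Lean document; each statement's English description precedes it below -/
import Mathlib

section
/- Let K > 0, G ∈ L²(ℝ^d), and h₁, …, h_N ∈ L²(ℝ^d) such that for each k ∈ [N] there exists ν_k ∈ ℝ^d with the Fourier–Plancherel transform of h_k vanishing almost everywhere outside the tube T_{ν_k} = {ξ ∈ ℝ^d : ∃ α ∈ ℝ, ‖ξ − α ν_k‖_∞ ≤ K}. Then ‖G − ∑_{k=1}^N h_k‖_{L²}² ≥ ‖G‖_{L²}² − N · sup_{ν ∈ ℝ^d} ∫_{T_ν} |𝓕G(ξ)|² dξ, where 𝓕G denotes the Fourier–Plancherel transform of G. -/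
/-!
Write `g = F G` and `s = F (∑ k, h k)`. Since `F` is a linear isometry, the claim is a lower bound
for `‖g - s‖²`, where `s` vanishes almost everywhere off the union of the tubes `T k`. Off that
union `g - s = g`, and on it `‖g‖²` is at most `∑ k, 1_{T k} ‖g‖²`, so almost everywhere
`‖g‖² ≤ ‖g - s‖² + ∑ k, 1_{T k} ‖g‖²`. It remains to integrate and to bound each tube integral by
the supremum, which is finite because all of these integrals are at most `‖g‖²`.

The sets `T k` enter only through their measurable hulls `toMeasurable volume (T k)`, which give
the same restricted measures; this makes indicator functions usable without a measurability proof.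
-/

open MeasureTheory Real Finset

/-- The classical Fourier integral of a function on `ℝ^d`. -/
noncomputable def fourierNd (d : ℕ) (f : EuclideanSpace ℝ (Fin d) → ℂ)
    (ξ : EuclideanSpace ℝ (Fin d)) : ℂ :=
  ∫ x : EuclideanSpace ℝ (Fin d),
    Complex.exp (-2 * Real.pi * Complex.I * (∑ j, x j * ξ j)) * f x

/-- The `ℓ^∞`-tube of radius `K` in direction `ν`. -/
def tube (d : ℕ) (K : ℝ) (ν : EuclideanSpace ℝ (Fin d)) : Set (EuclideanSpace ℝ (Fin d)) :=
  {ξ | ∃ α : ℝ, ∀ j, |ξ j - α * ν j| ≤ K}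

lemma L2_norm_sq_eq_integral {X : Type*} [MeasurableSpace X] {μ : Measure X} (f : Lp ℂ 2 μ) :
    ‖f‖ ^ 2 = ∫ x, ‖f x‖ ^ 2 ∂μ := by
  have h1 : RCLike.re (inner ℂ f f) = ‖f‖ ^ 2 := inner_self_eq_norm_sq f
  rw [← h1, L2.inner_def, ← integral_re (L2.integrable_inner f f)]
  exact integral_congr_ae (.of_forall fun x => inner_self_eq_norm_sq (f x))

lemma L2_integrable_norm_sq {X : Type*} [MeasurableSpace X] {μ : Measure X} (f : Lp ℂ 2 μ) :
    Integrable (fun x => ‖f x‖ ^ 2) μ :=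
  (memLp_two_iff_integrable_sq_norm (Lp.aestronglyMeasurable f)).1 (Lp.memLp f)

/-- In any s-finite `L²` space, subtracting functions supported in sets `T k` (not assumed
measurable) lowers the squared norm of `g` by at most its total mass on these sets. -/
lemma L2_norm_sq_le_add_sum_setIntegral {X ι : Type*} [MeasurableSpace X] [Fintype ι]
    {μ : Measure X} [SFinite μ] (g : Lp ℂ 2 μ) (f : ι → Lp ℂ 2 μ) (T : ι → Set X)
    (hT : ∀ k, ∀ᵐ x ∂μ, x ∉ T k → f k x = 0) :
    ‖g‖ ^ 2 ≤ ‖g - ∑ k, f k‖ ^ 2 + ∑ k, ∫ x in T k, ‖g x‖ ^ 2 ∂μ := by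
  have hg := L2_integrable_norm_sq g
  have hm : ∀ k, MeasurableSet (toMeasurable μ (T k)) := fun k => measurableSet_toMeasurable _ _
  have hsum : ∀ k, ∫ x in T k, ‖g x‖ ^ 2 ∂μ
      = ∫ x, (toMeasurable μ (T k)).indicator (fun x => ‖g x‖ ^ 2) x ∂μ := fun k => by
    rw [integral_indicator (hm k), Measure.restrict_toMeasurable_of_sFinite]
  have hint : ∀ k, Integrable ((toMeasurable μ (T k)).indicator (fun x => ‖g x‖ ^ 2)) μ :=
    fun k => hg.indicator (hm k)
  simp_rw [hsum]
  rw [L2_norm_sq_eq_integral, L2_norm_sq_eq_integral, ← integral_finsetSum _ fun k _ => hint k,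
    ← integral_add (L2_integrable_norm_sq _) (integrable_finsetSum _ fun k _ => hint k)]
  refine integral_mono_ae hg
    ((L2_integrable_norm_sq _).add (integrable_finsetSum _ fun k _ => hint k)) ?_
  filter_upwards [ae_all_iff.2 hT, Lp.coeFn_sub g (∑ k, f k),
    Lp.coeFn_finsetSum univ f] with x hx hsub hs
  have hnn : ∀ k ∈ univ, 0 ≤ (toMeasurable μ (T k)).indicator (fun x => ‖g x‖ ^ 2) x :=
    fun k _ => Set.indicator_nonneg (fun _ _ => by positivity) _
  by_cases hxT : ∃ k, x ∈ T k
  · obtain ⟨k, hk⟩ := hxT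
    have h1 := Finset.single_le_sum hnn (mem_univ k)
    rw [Set.indicator_of_mem (subset_toMeasurable _ _ hk)] at h1
    exact h1.trans (le_add_of_nonneg_left (by positivity))
  · push Not at hxT
    have h0 : (g - ∑ k, f k : Lp ℂ 2 μ) x = g x := by
      rw [hsub, Pi.sub_apply, hs]
      simp [fun k => hx k (hxT k)]
    rw [h0]
    exact le_add_of_nonneg_right (Finset.sum_nonneg hnn)

theorem stmt2 (d : ℕ) (hd : 1 ≤ d) (K : ℝ) (hK : 0 < K) (N : ℕ)
    -- `F` is the Fourier–Plancherel transform: a linear isometry of `L²(ℝ^d)`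
    -- that agrees with the classical Fourier integral on integrable functions.
    (F : Lp ℂ 2 (volume : Measure (EuclideanSpace ℝ (Fin d))) →ₗᵢ[ℂ]
        Lp ℂ 2 (volume : Measure (EuclideanSpace ℝ (Fin d))))
    (hF : ∀ f : Lp ℂ 2 (volume : Measure (EuclideanSpace ℝ (Fin d))),
        Integrable (f : EuclideanSpace ℝ (Fin d) → ℂ) →
          (F f : EuclideanSpace ℝ (Fin d) → ℂ) =ᵐ[volume] fourierNd d f)
    (G : Lp ℂ 2 (volume : Measure (EuclideanSpace ℝ (Fin d))))
    (h : Fin N → Lp ℂ 2 (volume : Measure (EuclideanSpace ℝ (Fin d))))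
    (ν : Fin N → EuclideanSpace ℝ (Fin d))
    (hsupp : ∀ k, ∀ᵐ ξ ∂(volume : Measure (EuclideanSpace ℝ (Fin d))),
        ξ ∉ tube d K (ν k) → (F (h k) : EuclideanSpace ℝ (Fin d) → ℂ) ξ = 0) :
    ‖G‖ ^ 2 - (N : ℝ) *
        ⨆ u : EuclideanSpace ℝ (Fin d),
          ∫ ξ in tube d K u, ‖(F G : EuclideanSpace ℝ (Fin d) → ℂ) ξ‖ ^ 2
      ≤ ‖G - ∑ k, h k‖ ^ 2 := by
  have key := L2_norm_sq_le_add_sum_setIntegral (F G) (fun k => F (h k))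
    (fun k => tube d K (ν k)) hsupp
  rw [← map_sum, ← map_sub, F.norm_map, F.norm_map] at key
  have hbdd : BddAbove (Set.range fun u : EuclideanSpace ℝ (Fin d) =>
      ∫ ξ in tube d K u, ‖(F G : EuclideanSpace ℝ (Fin d) → ℂ) ξ‖ ^ 2) := by
    refine ⟨∫ ξ, ‖(F G : EuclideanSpace ℝ (Fin d) → ℂ) ξ‖ ^ 2, ?_⟩
    rintro _ ⟨u, rfl⟩
    exact setIntegral_le_integral (L2_integrable_norm_sq _) (.of_forall fun _ => by positivity)
  have hle := Finset.sum_le_card_nsmul univ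
    (fun k => ∫ ξ in tube d K (ν k), ‖(F G : EuclideanSpace ℝ (Fin d) → ℂ) ξ‖ ^ 2) _
    fun k _ => le_ciSup hbdd (ν k)
  rw [card_univ, Fintype.card_fin, nsmul_eq_mul] at hle
  linarith
end

section
/- Let d ≥ 1, K > 0, γ > 0, r > 0 and w, v ∈ ℝ^d. For S ⊆ [d] set ξ_S = r(v + I_S w), where I_S is the diagonal 0/1 matrix keeping the coordinates in S; set Ω = {j ∈ [d] : r|w_j| ≥ γ d²}, η = |Ω|/d, τ = sup_{S ⊆ [d]} ‖v + I_S w‖_∞, and for ξ ∈ ℝ^d define D(ξ) = ∑_{S ⊆ [d]} ∏_{j=1}^d min(1, 2K/(π(|ξ_j − ξ_{S,j}| − K)₊)), with the convention that the quotient is +∞ (so the min is 1) when the denominator vanishes. If d > 2√(K/γ), then for every ξ ∈ ℝ^d, D(ξ) ≤ C_{K,γ} · 2^{d(1−η)} · min{1, 2K / (π (‖ξ‖_∞ − r τ − K)₊)}, where C_{K,γ} = 2 exp(√(8K/(πγ))). -/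
/-!
The summand indexed by `S` is a product over the coordinates `j` whose `j`-th factor depends only
on whether `j ∈ S`, so the sum over all `S` factors as `∏ j, (a j + b j)`, where `a j`, `b j ≤ 1`
are the values of the decay profile at distance `|ξ j - r (v j + w j)|` and `|ξ j - r v j|`
respectively.

For `j ∉ Ω` one has `a j + b j ≤ 2`. For `j ∈ Ω` the two centres are at least `γ d²` apart, so one
of the two distances is at least `γ d² / 2`; since `γ d² / 4 > K`, this yields
`a j + b j ≤ 1 + 8 K / (π γ d²)` (`decay_far`, `decay_pair`). The product of these bounds is at most
`2 ^ (d - |Ω|) * exp (c² / d)` with `c = √(8 K / (π γ))`, and `c ≤ d`.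

Finally, a coordinate `j₀` with `|ξ j₀| = ‖ξ‖` is at distance at least `‖ξ‖ - r τ` from both
centres, so its factor is at most twice the profile at `‖ξ‖ - r τ`. All the bounds used for the
other factors are at least `1`, so putting the bound for `j₀` back only increases the product.
-/

open Real Finset

/-- The decay profile `t ↦ min(1, 2K / (π (t - K)₊))`, equal to `1` where the denominator
vanishes. -/
noncomputable def decay (K t : ℝ) : ℝ :=
  if max (t - K) 0 = 0 then 1 else min 1 (2 * K / (Real.pi * max (t - K) 0))

lemma decay_le_one (K t : ℝ) : decay K t ≤ 1 := by
  unfold decay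
  split_ifs
  · exact le_rfl
  · exact min_le_left _ _

lemma decay_nonneg {K : ℝ} (hK : 0 < K) (t : ℝ) : 0 ≤ decay K t := by
  unfold decay
  split_ifs
  · exact zero_le_one
  · exact le_min zero_le_one (by positivity)

lemma decay_antitone {K : ℝ} (hK : 0 < K) : Antitone (decay K) := by
  intro s t hst
  by_cases hs : max (s - K) 0 = 0
  · have h1 : decay K s = 1 := if_pos hs
    exact h1 ▸ decay_le_one K t
  · have hs' : 0 < max (s - K) 0 := lt_of_le_of_ne (le_max_right _ _) (Ne.symm hs)
    have hmax : max (s - K) 0 ≤ max (t - K) 0 := max_le_max (by linarith) le_rfl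
    have ht : max (t - K) 0 ≠ 0 := (hs'.trans_le hmax).ne'
    unfold decay
    rw [if_neg hs, if_neg ht]
    gcongr

/-- At distance at least `M / 2`, with `M` large compared to `K`, the profile is of order
`K / M`, because `M / 2 - K ≥ M / 4`. -/
lemma decay_far {K M t : ℝ} (hK : 0 < K) (hM : 4 * K < M) (ht : M / 2 ≤ t) :
    decay K t ≤ 8 * K / (Real.pi * M) := by
  have hpos : 0 < t - K := by linarith
  have hmax : max (t - K) 0 = t - K := max_eq_left hpos.le
  unfold decay
  rw [hmax, if_neg hpos.ne']
  refine (min_le_right _ _).trans ?_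
  have hpi := Real.pi_pos
  have hM0 : 0 < M := by linarith
  rw [div_le_div_iff₀ (by positivity) (by positivity)]
  have h : M ≤ 4 * (t - K) := by linarith
  nlinarith [mul_le_mul_of_nonneg_left h (mul_pos hK hpi).le]

/-- If two centres are at least `M` apart, any point is at distance at least `M / 2` from one
of them. -/
lemma decay_pair {K M x p q : ℝ} (hK : 0 < K) (hM : 4 * K < M) (hpq : M ≤ |p - q|) :
    decay K |x - p| + decay K |x - q| ≤ 1 + 8 * K / (Real.pi * M) := by
  have htri : |p - q| ≤ |x - p| + |x - q| := by
    rw [abs_sub_comm x p]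
    exact abs_sub_le p x q
  rcases le_total (M / 2) |x - p| with h | h
  · linarith [decay_far hK hM h, decay_le_one K |x - q|]
  · have h' : M / 2 ≤ |x - q| := by linarith
    linarith [decay_far hK hM h', decay_le_one K |x - p|]

/-- A sum over all subsets of products whose factors only see membership is a product of
two-term sums. -/
lemma sum_prod_ite {ι : Type*} [Fintype ι] [DecidableEq ι] (a b : ι → ℝ) :
    ∑ S : Finset ι, ∏ j, (if j ∈ S then a j else b j) = ∏ j, (a j + b j) := by
  rw [Finset.prod_add, Finset.powerset_univ]
  refine Finset.sum_congr rfl fun S _ => ?_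
  rw [Finset.prod_ite, Finset.filter_mem_eq_inter, Finset.univ_inter, ← Finset.sdiff_eq_filter]

/-- With `y = (c / d) ^ 2`, the power is at most `exp (d * y) = exp (c ^ 2 / d)`, and
`c ^ 2 / d ≤ c` because `c ≤ d`. -/
lemma one_add_pow_le {n d : ℕ} {y c : ℝ} (hnd : n ≤ d) (hc : 0 ≤ c) (hcd : c ≤ d)
    (hd : 0 < (d : ℝ)) (hy : y * (d : ℝ) ^ 2 = c ^ 2) (hy0 : 0 ≤ y) :
    (1 + y) ^ n ≤ Real.exp c := by
  have hyd : d * y ≤ c := by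
    have : d * (d * y) ≤ d * c := by nlinarith
    exact le_of_mul_le_mul_left this hd
  calc (1 + y) ^ n ≤ (1 + y) ^ d := pow_le_pow_right₀ (by linarith) hnd
    _ ≤ (Real.exp y) ^ d := by
        gcongr
        linarith [Real.add_one_le_exp y]
    _ = Real.exp (d * y) := (Real.exp_nat_mul y d).symm
    _ ≤ Real.exp c := Real.exp_le_exp.2 hyd

theorem stmt4 (d : ℕ) (hd : 1 ≤ d) (K γ r : ℝ) (hK : 0 < K) (hγ : 0 < γ) (hr : 0 < r)
    (w v : Fin d → ℝ)
    -- ξ_S = r (v + I_S w)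
    (ξS : Finset (Fin d) → Fin d → ℝ)
    (hξS : ∀ S j, ξS S j = r * (v j + if j ∈ S then w j else 0))
    -- η = |Ω|/d where Ω = {j : r |w_j| ≥ γ d²}
    (η : ℝ)
    (hη : η = ((univ.filter fun j : Fin d => γ * (d : ℝ) ^ 2 ≤ r * |w j|).card : ℝ) / d)
    -- τ = sup over subsets S of ‖v + I_S w‖_∞
    (τ : ℝ) (hτ : τ = ⨆ S : Finset (Fin d), ‖(fun j => v j + if j ∈ S then w j else 0)‖)
    (hdim : 2 * Real.sqrt (K / γ) < (d : ℝ))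
    (ξ : Fin d → ℝ) :
    (∑ S : Finset (Fin d), ∏ j,
        (if max (|ξ j - ξS S j| - K) 0 = 0 then 1
         else min 1 (2 * K / (Real.pi * max (|ξ j - ξS S j| - K) 0))))
      ≤ (2 * Real.exp (Real.sqrt (8 * K / (Real.pi * γ)))) *
          2 ^ ((d : ℝ) * (1 - η)) *
          (if max (‖ξ‖ - r * τ - K) 0 = 0 then 1
           else min 1 (2 * K / (Real.pi * max (‖ξ‖ - r * τ - K) 0))) := by
  have hd0 : (0 : ℝ) < d := by exact_mod_cast hd
  have hpi := Real.pi_pos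
  have : Nonempty (Fin d) := ⟨⟨0, hd⟩⟩
  set Ω := univ.filter fun j : Fin d => γ * (d : ℝ) ^ 2 ≤ r * |w j| with hΩ
  set c := Real.sqrt (8 * K / (Real.pi * γ)) with hc
  set M := γ * (d : ℝ) ^ 2 with hM
  set y := 8 * K / (Real.pi * M) with hy
  have hy0 : 0 ≤ y := by positivity
  -- the dimension hypothesis makes the separation `M = γ d²` exceed `4 K`
  have hM4 : 4 * K < M := by
    have h1 : 4 * (K / γ) < (d : ℝ) ^ 2 := by
      have := pow_lt_pow_left₀ hdim (by positivity) two_ne_zero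
      rw [mul_pow, Real.sq_sqrt (by positivity)] at this
      linarith
    calc 4 * K = γ * (4 * (K / γ)) := by field_simp
      _ < M := by rw [hM]; gcongr
  have hcd : c ≤ d := by
    rw [hc, Real.sqrt_le_left hd0.le, div_le_iff₀ (by positivity)]
    nlinarith [Real.pi_gt_three]
  have hexp : (1 + y) ^ Ω.card ≤ Real.exp c := by
    refine one_add_pow_le ?_ (Real.sqrt_nonneg _) hcd hd0 ?_ hy0
    · simpa using Finset.card_le_univ Ω
    · rw [hc, Real.sq_sqrt (by positivity), hy, hM]
      field_simp
  -- factorisation of the sum over subsets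
  set a : Fin d → ℝ := fun j => decay K |ξ j - r * (v j + w j)| with ha
  set b : Fin d → ℝ := fun j => decay K |ξ j - r * v j| with hb
  have hfac : (∑ S : Finset (Fin d), ∏ j,
        (if max (|ξ j - ξS S j| - K) 0 = 0 then 1
         else min 1 (2 * K / (Real.pi * max (|ξ j - ξS S j| - K) 0)))) = ∏ j, (a j + b j) := by
    rw [← sum_prod_ite]
    refine Finset.sum_congr rfl fun S _ => Finset.prod_congr rfl fun j _ => ?_
    change decay K |ξ j - ξS S j| = _
    rw [hξS]
    split_ifs <;> simp [ha, hb]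
  have hab0 : ∀ j, 0 ≤ a j + b j := fun j =>
    add_nonneg (decay_nonneg hK _) (decay_nonneg hK _)
  set u : Fin d → ℝ := fun j => if M ≤ r * |w j| then 1 + y else 2 with hu
  have hu1 : ∀ j, 1 ≤ u j := by
    intro j
    simp only [hu]
    split_ifs <;> linarith
  have habu : ∀ j, a j + b j ≤ u j := by
    intro j
    simp only [hu]
    split_ifs with h
    · refine decay_pair hK hM4 ?_
      rwa [← mul_sub, add_sub_cancel_left, abs_mul, abs_of_pos hr]
    · linarith [decay_le_one K |ξ j - r * (v j + w j)|, decay_le_one K |ξ j - r * v j|]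
  -- every centre has all its coordinates bounded by `r τ`
  have hτ' : ∀ S j, |ξS S j| ≤ r * τ := by
    intro S j
    rw [hξS, abs_mul, abs_of_pos hr, hτ]
    gcongr
    refine le_trans ?_ (le_ciSup (Set.finite_range fun S : Finset (Fin d) =>
      ‖(fun j => v j + if j ∈ S then w j else 0)‖).bddAbove S)
    exact norm_le_pi_norm (fun j => v j + if j ∈ S then w j else 0) j
  obtain ⟨j₀, hj₀⟩ : ∃ j, ‖ξ j‖ = ‖ξ‖ := by
    obtain ⟨j, -, hj⟩ := Finset.exists_mem_eq_sup' (s := univ) Finset.univ_nonempty fun j => ‖ξ j‖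
    refine ⟨j, le_antisymm (norm_le_pi_norm ξ j) ?_⟩
    rw [pi_norm_le_iff_of_nonneg (norm_nonneg _)]
    intro i
    rw [← hj]
    exact Finset.le_sup' (fun j => ‖ξ j‖) (Finset.mem_univ i)
  have hdist : ∀ S, decay K |ξ j₀ - ξS S j₀| ≤ decay K (‖ξ‖ - r * τ) := by
    intro S
    refine decay_antitone hK ?_
    rw [← hj₀, Real.norm_eq_abs]
    linarith [abs_sub_abs_le_abs_sub (ξ j₀) (ξS S j₀), hτ' S j₀]
  have ha0 : a j₀ ≤ decay K (‖ξ‖ - r * τ) := by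
    simpa [hξS, ha] using hdist univ
  have hb0 : b j₀ ≤ decay K (‖ξ‖ - r * τ) := by
    simpa [hξS, hb] using hdist ∅
  -- the exponent `d (1 - η)` counts the complement of `Ω`
  have hpow : (2 : ℝ) ^ ((d : ℝ) * (1 - η))
      = 2 ^ (univ.filter fun j : Fin d => ¬ M ≤ r * |w j|).card := by
    rw [← Real.rpow_natCast]
    congr 1
    have hcard := Finset.card_filter_add_card_filter_not (s := (univ : Finset (Fin d)))
      (fun j : Fin d => M ≤ r * |w j|)
    rw [← hΩ, Finset.card_univ, Fintype.card_fin] at hcard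
    have hcard' : (Ω.card : ℝ) + (univ.filter fun j : Fin d => ¬ M ≤ r * |w j|).card = d := by
      exact_mod_cast hcard
    rw [hη]
    field_simp
    linarith
  have huprod : ∏ j, u j ≤ Real.exp c * 2 ^ ((d : ℝ) * (1 - η)) := by
    rw [hpow, hu, Finset.prod_ite, Finset.prod_const, Finset.prod_const, ← hΩ]
    gcongr
  change _ ≤ 2 * Real.exp c * 2 ^ ((d : ℝ) * (1 - η)) * decay K (‖ξ‖ - r * τ)
  have hF := decay_nonneg hK (‖ξ‖ - r * τ)
  rw [hfac, ← Finset.mul_prod_erase univ _ (Finset.mem_univ j₀)]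
  calc (a j₀ + b j₀) * ∏ j ∈ univ.erase j₀, (a j + b j)
      ≤ (2 * decay K (‖ξ‖ - r * τ)) * ∏ j ∈ univ.erase j₀, u j := by
        refine mul_le_mul (by linarith) (Finset.prod_le_prod (fun j _ => hab0 j)
          fun j _ => habu j) (Finset.prod_nonneg fun j _ => hab0 j) (by positivity)
    _ ≤ (2 * decay K (‖ξ‖ - r * τ)) * ∏ j, u j := by
        refine mul_le_mul_of_nonneg_left ?_ (by positivity)
        rw [← Finset.mul_prod_erase univ u (Finset.mem_univ j₀)]
        exact le_mul_of_one_le_left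
          (Finset.prod_nonneg fun j _ => zero_le_one.trans (hu1 j)) (hu1 j₀)
    _ ≤ (2 * decay K (‖ξ‖ - r * τ)) * (Real.exp c * 2 ^ ((d : ℝ) * (1 - η))) := by gcongr
    _ = 2 * Real.exp c * 2 ^ ((d : ℝ) * (1 - η)) * decay K (‖ξ‖ - r * τ) := by ring
end

section
/- Let d ≥ 2, K > 0, R > 0, ν ∈ ℝ^d, and let T = {ξ ∈ ℝ^d : ∃ α ∈ ℝ, ‖ξ − α ν‖_∞ ≤ K} be the ℓ^∞-tube of radius K in direction ν. If μ denotes the d-dimensional Lebesgue measure, then μ(T ∩ [−R, R]^d) ≤ 8 e² (d−1)(K+R)(2K)^{d−1}. -/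
open MeasureTheory Real

/-!
After rescaling a nonzero direction `ν` to a vector `w` of sup norm `1`, every point
of the tube lying in `[-R, R]^d` is within `K` of some `β • w` with `|β| ≤ K + R`
(`exists_bounded_parameter`).  Cut the range of `β` into intervals of length `δ = 2K / (d - 1)`.
The points belonging to one interval lie in a cube of side `2K + δ = 2K (1 + 1 / (d - 1))`, whose
volume is at most `e² (2K)^d` (`one_add_inv_pow_le`).  At most `2 (K + R) (d - 1) / K` intervals
are needed, so the total volume is at most `4 e² (d - 1) (K + R) (2K)^(d - 1)`.
-/

lemma one_add_inv_pow_le (n : ℕ) (hn : 1 ≤ n) :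
    (1 + 1 / (n : ℝ)) ^ (n + 1) ≤ Real.exp 2 := by
  have hn' : (1 : ℝ) ≤ n := by exact_mod_cast hn
  calc (1 + 1 / (n : ℝ)) ^ (n + 1) ≤ (Real.exp (1 / (n : ℝ))) ^ (n + 1) := by
        gcongr
        linarith [Real.add_one_le_exp (1 / (n : ℝ))]
    _ = Real.exp (((n + 1 : ℕ) : ℝ) * (1 / n)) := (Real.exp_nat_mul _ _).symm
    _ ≤ Real.exp 2 := by
        apply Real.exp_le_exp.mpr
        rw [mul_one_div, div_le_iff₀ (by linarith)]
        push_cast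
        linarith

/-- The direction may be rescaled to sup norm at most `1` so that the points of the tube in
`[-R, R]^d` only need parameters `β` with `|β| ≤ K + R`. -/
lemma exists_bounded_parameter (d : ℕ) (hd : 2 ≤ d) (K R : ℝ)
    (ν : Fin d → ℝ) :
    ∃ w : Fin d → ℝ, (∀ j, |w j| ≤ 1) ∧
      ∀ ξ : Fin d → ℝ, (∃ α : ℝ, ∀ j, |ξ j - α * ν j| ≤ K) → (∀ j, |ξ j| ≤ R) →
        ∃ β : ℝ, |β| ≤ K + R ∧ ∀ j, |ξ j - β * w j| ≤ K := by
  have : Nonempty (Fin d) := ⟨⟨0, by omega⟩⟩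
  obtain ⟨i, hi⟩ := Finite.exists_max (fun j => |ν j|)
  -- If `ν = 0`, then `w = 0` by division by zero, which is also the right choice.
  refine ⟨fun j => ν j / ν i, fun j => ?_, fun ξ hα hξ => ?_⟩
  · rw [abs_div]
    exact div_le_one_of_le₀ (hi j) (abs_nonneg _)
  · obtain ⟨α, hα⟩ := hα
    refine ⟨α * ν i, ?_, fun j => ?_⟩
    · have h1 := abs_le.mp (hα i)
      have h2 := abs_le.mp (hξ i)
      rw [abs_le]
      constructor <;> linarith
    · have : α * ν i * (ν j / ν i) = α * ν j := by
        by_cases h : ν i = 0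
        · have hj : ν j = 0 := by
            have := hi j
            simpa [h] using this
          simp [h, hj]
        · field_simp
      rw [this]
      exact hα j

theorem stmt6 (d : ℕ) (hd : 2 ≤ d) (K R : ℝ) (hK : 0 < K) (hR : 0 < R)
    (ν : Fin d → ℝ) :
    volume ({ξ : Fin d → ℝ | ∃ α : ℝ, ∀ j, |ξ j - α * ν j| ≤ K} ∩
        {ξ : Fin d → ℝ | ∀ j, |ξ j| ≤ R})
      ≤ ENNReal.ofReal (8 * Real.exp 2 * ((d : ℝ) - 1) * (K + R) * (2 * K) ^ (d - 1)) := by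
  obtain ⟨w, hw, hwξ⟩ := exists_bounded_parameter d hd K R ν
  obtain ⟨n, rfl⟩ : ∃ n, d = n + 1 := ⟨d - 1, by omega⟩
  have hn : 1 ≤ n := by omega
  have hn' : (1 : ℝ) ≤ n := by exact_mod_cast hn
  have hn0 : (0 : ℝ) < n := by linarith
  set δ : ℝ := 2 * K / n with hδ
  have hδ0 : 0 < δ := by positivity
  set M : ℕ := ⌊2 * (K + R) / δ⌋₊ with hM
  set c : ℕ → Fin (n + 1) → ℝ := fun m j => (-(K + R) + m * δ + δ / 2) * w j with hc
  have hcover : ({ξ : Fin (n + 1) → ℝ | ∃ α : ℝ, ∀ j, |ξ j - α * ν j| ≤ K} ∩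
        {ξ : Fin (n + 1) → ℝ | ∀ j, |ξ j| ≤ R}) ⊆
      ⋃ m ∈ Finset.range (M + 1), Metric.closedBall (c m) (K + δ / 2) := by
    rintro ξ ⟨h1, h2⟩
    obtain ⟨β, hβ, hξ⟩ := hwξ ξ h1 h2
    obtain ⟨hβ1, hβ2⟩ := abs_le.mp hβ
    have hq : 0 ≤ (β + (K + R)) / δ := div_nonneg (by linarith) hδ0.le
    simp only [Set.mem_iUnion, Finset.mem_range]
    refine ⟨⌊(β + (K + R)) / δ⌋₊, ?_, ?_⟩
    · apply Nat.lt_succ_of_le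
      apply Nat.floor_le_floor
      gcongr
      linarith
    · have f1 := Nat.floor_le hq
      have f2 := Nat.lt_floor_add_one ((β + (K + R)) / δ)
      rw [le_div_iff₀ hδ0] at f1
      rw [div_lt_iff₀ hδ0] at f2
      rw [Metric.mem_closedBall, dist_pi_le_iff (by positivity)]
      intro j
      rw [Real.dist_eq]
      set m := ⌊(β + (K + R)) / δ⌋₊
      have e : ξ j - c m j = (ξ j - β * w j) + (β - (-(K + R) + m * δ + δ / 2)) * w j := by
        simp only [hc]; ring
      rw [e]
      refine (abs_add_le _ _).trans (add_le_add (hξ j) ?_)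
      rw [abs_mul]
      have h3 : |β - (-(K + R) + m * δ + δ / 2)| ≤ δ / 2 := by
        rw [abs_le]; constructor <;> linarith
      calc _ ≤ δ / 2 * 1 := mul_le_mul h3 (hw j) (abs_nonneg _) (by positivity)
        _ = δ / 2 := mul_one _
  have hM1 : ((M : ℝ) + 1) ≤ 2 * ((K + R) * n / K) := by
    have h1 : (M : ℝ) ≤ 2 * (K + R) / δ := Nat.floor_le (by positivity)
    have h2 : 2 * (K + R) / δ = (K + R) * n / K := by rw [hδ]; field_simp
    have h3 : 1 ≤ (K + R) * n / K := by
      rw [le_div_iff₀ hK]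
      nlinarith
    linarith
  have hside : (2 * (K + δ / 2)) ^ (n + 1) ≤ Real.exp 2 * (2 * K) ^ (n + 1) := by
    have : 2 * (K + δ / 2) = (1 + 1 / (n : ℝ)) * (2 * K) := by rw [hδ]; field_simp
    rw [this, mul_pow]
    gcongr
    exact one_add_inv_pow_le n hn
  calc _ ≤ volume (⋃ m ∈ Finset.range (M + 1), Metric.closedBall (c m) (K + δ / 2)) :=
        measure_mono hcover
    _ ≤ ∑ m ∈ Finset.range (M + 1), volume (Metric.closedBall (c m) (K + δ / 2)) :=
        measure_biUnion_finset_le _ _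
    _ = ENNReal.ofReal (((M : ℝ) + 1) * (2 * (K + δ / 2)) ^ (n + 1)) := by
        have hv : ∀ m, volume (Metric.closedBall (c m) (K + δ / 2)) =
            ENNReal.ofReal ((2 * (K + δ / 2)) ^ (n + 1)) := fun m => by
          rw [Real.volume_pi_closedBall _ (by positivity), Fintype.card_fin]
        simp only [hv, Finset.sum_const, Finset.card_range, nsmul_eq_mul]
        rw [ENNReal.ofReal_mul (by positivity), ← Nat.cast_succ, ENNReal.ofReal_natCast]
    _ ≤ _ := by
        apply ENNReal.ofReal_le_ofReal
        calc _ ≤ 2 * ((K + R) * n / K) * (Real.exp 2 * (2 * K) ^ (n + 1)) := by gcongr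
          _ = 4 * Real.exp 2 * n * (K + R) * (2 * K) ^ n := by
            rw [pow_succ]; field_simp; ring
          _ ≤ 8 * Real.exp 2 * n * (K + R) * (2 * K) ^ n := by
            gcongr
            norm_num
          _ = _ := by push_cast; simp
end

section
/- Let r > 0, L > 0, and let f : [−r, r] → ℝ be L-Lipschitz. Then for every integer n ≥ 2 there exist complex coefficients b_{−n}, …, b_n ∈ ℂ and frequencies w_{−n}, …, w_n ∈ ℝ such that the function q_n(t) = ∑_{k=−n}^n b_k e^{i w_k t} is real-valued on [−r, r], satisfies sup_{t ∈ [−r,r]} |f(t) − q_n(t)| ≤ 3(1 + 2 L² r²) (log n)/n, and moreover |w_k| ≤ π |k| / r and |b_k| ≤ sup_{t ∈ [−r,r]} |f(t)| for every k ∈ {−n, …, n}. -/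
/-!
Substituting `t = (2 r / π) α` and composing with `α ↦ arcsin (sin α)`, which is the identity on
`[-π/2, π/2]`, turns `f` into a `2π`-periodic function `F`. It is approximated by the discrete
convolution `q(α) = M⁻¹ ∑_j F(φ_j) K(α - φ_j)`, where `φ_j = 2πj/M`, `M = n + 2`, and
`K(x) = |∑_k a_k e^{ikx}|²` is the Fejér–Korovkin kernel: `a` is the normalized vector
`a_k ∝ sin((k+1)π/(n+2))`, `0 ≤ k ≤ n`, so that `∑ a_k² = 1` and
`∑ a_k a_{k+1} = cos(π/(n+2))` (`exists_weights`).

Since the nodes integrate trigonometric polynomials of degree less than `M` exactly (`sum_ec_nodes`),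
the weights `M⁻¹ K(α - φ_j)` are nonnegative, sum to `1`, and average `cos(α - φ_j)` to
`cos(π/(n+2))` (`sum_fker`, `sum_fker_cos`). The distance between `α` and `arcsin (sin φ)` has square
at most `π² (1 - cos(α - φ))/2` (`sq_sub_arcsin_sin_le`), so its weighted mean square is at most
`(π²/(2(n+2)))²`; hence `|F - q| ≤ π L r/(n+2)`, which is stronger than the required bound.
The `m`-th coefficient of `q` is a mean of values of `F` times `∑_{k-l=m} a_k a_l`, a factor of modulus
at most `∑ a_k² = 1` (`sum_fiber_le`).
-/

open Real Finset

/-- The character `x ↦ e^{imx}`. -/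
noncomputable def ec (m : ℤ) (x : ℝ) : ℂ := Complex.exp (Complex.I * (m * x))

lemma ec_add (m k : ℤ) (x : ℝ) : ec (m + k) x = ec m x * ec k x := by
  unfold ec
  rw [← Complex.exp_add]
  push_cast
  ring_nf

lemma ec_sub (m : ℤ) (x y : ℝ) : ec m (x - y) = ec m x * ec m (-y) := by
  unfold ec
  rw [← Complex.exp_add]
  push_cast
  ring_nf

lemma conj_ec (m : ℤ) (x : ℝ) : (starRingEnd ℂ) (ec m x) = ec (-m) x := by
  unfold ec
  rw [← Complex.exp_conj]
  simp

lemma norm_ec (m : ℤ) (x : ℝ) : ‖ec m x‖ = 1 := by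
  unfold ec
  have := Complex.norm_exp_I_mul_ofReal (m * x)
  simpa using this

/-- The equispaced nodes `2πj/M` annihilate every nonconstant character of degree below `M`. -/
lemma sum_ec_nodes (M : ℕ) (m : ℤ) (hm : |m| < M) (x : ℝ) :
    ∑ j ∈ range M, ec m (x - 2 * π * j / M) = if m = 0 then (M : ℂ) else 0 := by
  have hM : (M : ℤ) ≠ 0 := by
    have := abs_nonneg m
    omega
  have hMc : (M : ℂ) ≠ 0 := by exact_mod_cast hM
  split_ifs with h
  · subst h
    simp [ec]
  · set z : ℂ := Complex.exp (-(2 * π * Complex.I * m / M)) with hz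
    have h1 : ∀ j ∈ range M, ec m (x - 2 * π * j / M) = ec m x * z ^ j := by
      intro j _
      unfold ec
      rw [hz, ← Complex.exp_nat_mul, ← Complex.exp_add]
      push_cast
      congr 1
      field_simp
      ring
    have hzM : z ^ M = 1 := by
      rw [hz, ← Complex.exp_nat_mul, Complex.exp_eq_one_iff]
      refine ⟨-m, ?_⟩
      push_cast
      field_simp
    have hz1 : z ≠ 1 := by
      intro hz1
      rw [hz, Complex.exp_eq_one_iff] at hz1
      obtain ⟨k, hk⟩ := hz1
      have hpi : (2 * π * Complex.I : ℂ) ≠ 0 := Complex.two_pi_I_ne_zero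
      have h2 : (2 * π * Complex.I : ℂ) * (-m) = (2 * π * Complex.I : ℂ) * (k * M) := by
        field_simp at hk
        linear_combination (2 * π * Complex.I : ℂ) * hk
      have h3 : (-m : ℤ) = k * M := by exact_mod_cast mul_left_cancel₀ hpi h2
      have h4 : (M : ℤ) ∣ m := ⟨-k, by linarith⟩
      exact h (Int.eq_zero_of_abs_lt_dvd h4 hm)
    rw [sum_congr rfl h1, ← mul_sum, geom_sum_eq hz1, hzM]
    simp

/-- The Fejér-type kernel `|∑_{k ≤ n} a_k e^{ikx}|²`, nonnegative and of degree `n`. -/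
noncomputable def fker (n : ℕ) (a : ℕ → ℝ) (x : ℝ) : ℝ :=
  Complex.normSq (∑ k ∈ range (n + 1), (a k : ℂ) * ec k x)

lemma fker_nonneg (n : ℕ) (a : ℕ → ℝ) (x : ℝ) : 0 ≤ fker n a x := Complex.normSq_nonneg _

lemma fker_eq (n : ℕ) (a : ℕ → ℝ) (x : ℝ) :
    (fker n a x : ℂ) = ∑ p ∈ range (n + 1) ×ˢ range (n + 1),
      (a p.1 * a p.2 : ℂ) * ec ((p.1 : ℤ) - p.2) x := by
  unfold fker
  rw [Complex.normSq_eq_conj_mul_self, mul_comm, map_sum, sum_mul_sum, sum_product]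
  refine sum_congr rfl fun k _ => sum_congr rfl fun l _ => ?_
  rw [map_mul, conj_ec, Complex.conj_ofReal, sub_eq_add_neg, ec_add]
  ring

lemma sum_fker (n : ℕ) (a : ℕ → ℝ) (x : ℝ) :
    ∑ j ∈ range (n + 2), fker n a (x - 2 * π * j / (n + 2 : ℕ))
      = (n + 2 : ℕ) * ∑ k ∈ range (n + 1), a k ^ 2 := by
  rw [← Complex.ofReal_inj, Complex.ofReal_sum]
  simp_rw [fker_eq]
  rw [sum_comm]
  simp_rw [← mul_sum]
  have h : ∀ p ∈ range (n + 1) ×ˢ range (n + 1), (a p.1 * a p.2 : ℂ) *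
      ∑ j ∈ range (n + 2), ec ((p.1 : ℤ) - p.2) (x - 2 * π * j / (n + 2 : ℕ))
      = if p.1 = p.2 then (n + 2 : ℕ) * (a p.1 : ℂ) ^ 2 else 0 := by
    intro p hp
    simp only [mem_product, mem_range] at hp
    rw [sum_ec_nodes (n + 2) _ (by rw [abs_lt]; push_cast; omega)]
    by_cases hpq : p.1 = p.2
    · rw [if_pos (by omega), if_pos hpq, hpq]
      ring
    · rw [if_neg (by omega), if_neg hpq, mul_zero]
  rw [sum_congr rfl h, sum_product]
  push_cast
  rw [mul_sum]
  refine sum_congr rfl fun k hk => ?_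
  rw [sum_ite_eq, if_pos hk]

lemma sum_fker_cos (n : ℕ) (a : ℕ → ℝ) (x : ℝ) :
    ∑ j ∈ range (n + 2), fker n a (x - 2 * π * j / (n + 2 : ℕ)) *
        Real.cos (x - 2 * π * j / (n + 2 : ℕ))
      = (n + 2 : ℕ) * ∑ k ∈ range n, a k * a (k + 1) := by
  have key : ∑ j ∈ range (n + 2), (fker n a (x - 2 * π * j / (n + 2 : ℕ)) : ℂ) *
        ec 1 (x - 2 * π * j / (n + 2 : ℕ))
      = (((n + 2 : ℕ) * ∑ k ∈ range n, a k * a (k + 1) : ℝ) : ℂ) := by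
    simp_rw [fker_eq, sum_mul]
    rw [sum_comm]
    simp_rw [mul_assoc (G := ℂ), ← ec_add, ← mul_sum]
    have h : ∀ p ∈ range (n + 1) ×ˢ range (n + 1), (a p.1 : ℂ) * (a p.2 *
        ∑ j ∈ range (n + 2), ec ((p.1 : ℤ) - p.2 + 1) (x - 2 * π * j / (n + 2 : ℕ)))
        = if p.1 + 1 = p.2 then (n + 2 : ℕ) * (a p.1 * a (p.1 + 1) : ℂ) else 0 := by
      intro p hp
      simp only [mem_product, mem_range] at hp
      rw [sum_ec_nodes (n + 2) _ (by rw [abs_lt]; push_cast; omega)]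
      by_cases hpq : p.1 + 1 = p.2
      · rw [if_pos (by omega), if_pos hpq, hpq]
        ring
      · rw [if_neg (by omega), if_neg hpq, mul_zero, mul_zero]
    rw [sum_congr rfl h, sum_product]
    push_cast
    rw [mul_sum, sum_range_succ]
    simp only [sum_ite_eq]
    rw [if_neg (by simp), add_zero]
    refine sum_congr rfl fun k hk => ?_
    rw [mem_range] at hk
    rw [if_pos (by rw [mem_range]; omega)]
  have := congrArg Complex.re key
  rw [Complex.re_sum, Complex.ofReal_re] at this
  rw [← this]
  refine sum_congr rfl fun j _ => ?_
  rw [Complex.re_ofReal_mul]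
  congr 1
  unfold ec
  rw [Int.cast_one, one_mul, mul_comm Complex.I, Complex.exp_ofReal_mul_I_re]

/-- The top eigenvector of the path graph on `n + 1` vertices, whose eigenvalue is
`2 cos(π/(n+2))`, maximizes `∑ a_k a_{k+1}` among unit vectors. -/
lemma exists_weights (n : ℕ) : ∃ a : ℕ → ℝ,
    ∑ k ∈ range (n + 1), a k ^ 2 = 1 ∧
    ∑ k ∈ range n, a k * a (k + 1) = Real.cos (π / (n + 2)) := by
  set θ : ℝ := π / (n + 2) with hθ
  have hn : (0 : ℝ) < n + 2 := by positivity
  set s : ℕ → ℝ := fun k => Real.sin (k * θ) with hs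
  set A : ℝ := ∑ k ∈ range (n + 1), s (k + 1) ^ 2 with hA
  have hs0 : s 0 = 0 := by simp [hs]
  have hsN : s (n + 2) = 0 := by
    simp only [hs, hθ]
    push_cast
    rw [mul_div_cancel₀ _ hn.ne', Real.sin_pi]
  have hApos : 0 < A := by
    have h1 : 0 < s 1 := by
      simp only [hs, Nat.cast_one, one_mul]
      refine Real.sin_pos_of_pos_of_lt_pi (by positivity) ?_
      rw [hθ, div_lt_iff₀ hn]
      nlinarith [Real.pi_pos, (Nat.cast_nonneg n : (0 : ℝ) ≤ n)]
    have h2 : s (0 + 1) ^ 2 ≤ A :=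
      single_le_sum (f := fun k => s (k + 1) ^ 2) (fun k _ => sq_nonneg _) (by simp)
    have : 0 < s (0 + 1) ^ 2 := by positivity
    linarith
  have hrec : ∀ k, s k + s (k + 2) = 2 * Real.cos θ * s (k + 1) := by
    intro k
    have e1 : (k : ℝ) * θ = ((k + 1 : ℕ) : ℝ) * θ - θ := by push_cast; ring
    have e2 : ((k + 2 : ℕ) : ℝ) * θ = ((k + 1 : ℕ) : ℝ) * θ + θ := by push_cast; ring
    simp only [hs]
    rw [e1, e2, Real.sin_sub, Real.sin_add]
    ring
  have hB1 : ∑ k ∈ range (n + 1), s k * s (k + 1) = ∑ k ∈ range n, s (k + 1) * s (k + 2) := by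
    rw [sum_range_succ']
    simp [hs0]
  have hB2 : ∑ k ∈ range (n + 1), s (k + 1) * s (k + 2)
      = ∑ k ∈ range n, s (k + 1) * s (k + 2) := by
    rw [sum_range_succ, hsN, mul_zero, add_zero]
  have hB : ∑ k ∈ range n, s (k + 1) * s (k + 2) = Real.cos θ * A := by
    have h : ∑ k ∈ range (n + 1), s k * s (k + 1) + ∑ k ∈ range (n + 1), s (k + 1) * s (k + 2)
        = 2 * Real.cos θ * A := by
      rw [← sum_add_distrib, hA, mul_sum]
      refine sum_congr rfl fun k _ => ?_
      linear_combination s (k + 1) * hrec k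
    rw [hB1, hB2] at h
    linarith
  have hsq : √A * √A = A := Real.mul_self_sqrt hApos.le
  refine ⟨fun k => s (k + 1) / √A, ?_, ?_⟩
  · simp_rw [div_pow, Real.sq_sqrt hApos.le, ← sum_div]
    exact div_self hApos.ne'
  · simp_rw [div_mul_div_comm, hsq, ← sum_div]
    rw [hB, mul_div_cancel_right₀ _ hApos.ne']

lemma sum_fiber_le (n : ℕ) (a : ℕ → ℝ) (ha : ∑ k ∈ range (n + 1), a k ^ 2 = 1) (m : ℤ) :
    ∑ p ∈ range (n + 1) ×ˢ range (n + 1) with (p.1 : ℤ) - p.2 = m, |a p.1 * a p.2| ≤ 1 := by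
  set T := (range (n + 1) ×ˢ range (n + 1)).filter (fun p => (p.1 : ℤ) - p.2 = m) with hT
  have hmem : ∀ p ∈ T, p.1 < n + 1 ∧ p.2 < n + 1 ∧ (p.1 : ℤ) - p.2 = m := by
    intro p hp
    simp only [hT, mem_filter, mem_product, mem_range] at hp
    tauto
  -- On the fiber `k - l = m` each of `k` and `l` determines the other.
  have h1 : ∑ p ∈ T, a p.1 ^ 2 ≤ 1 := by
    rw [← ha, ← sum_image (s := T) (g := Prod.fst) (f := fun k => a k ^ 2)]
    · refine sum_le_sum_of_subset_of_nonneg ?_ fun _ _ _ => sq_nonneg _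
      intro k hk
      obtain ⟨p, hp, rfl⟩ := mem_image.1 hk
      exact mem_range.2 (hmem p hp).1
    · intro p hp q hq h
      have h1 := hmem p hp
      have h2 := hmem q hq
      exact Prod.ext h (by omega)
  have h2 : ∑ p ∈ T, a p.2 ^ 2 ≤ 1 := by
    rw [← ha, ← sum_image (s := T) (g := Prod.snd) (f := fun k => a k ^ 2)]
    · refine sum_le_sum_of_subset_of_nonneg ?_ fun _ _ _ => sq_nonneg _
      intro k hk
      obtain ⟨p, hp, rfl⟩ := mem_image.1 hk
      exact mem_range.2 (hmem p hp).2.1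
    · intro p hp q hq h
      have h1 := hmem p hp
      have h2 := hmem q hq
      exact Prod.ext (by omega) h
  have h3 : ∑ p ∈ T, |a p.1 * a p.2| ≤ ∑ p ∈ T, (a p.1 ^ 2 + a p.2 ^ 2) / 2 := by
    refine sum_le_sum fun p _ => ?_
    rw [abs_mul]
    nlinarith [sq_nonneg (|a p.1| - |a p.2|), sq_abs (a p.1), sq_abs (a p.2)]
  rw [← sum_div, sum_add_distrib] at h3
  linarith

/-- Folding `φ` into `[-π/2, π/2]` by `arcsin ∘ sin` keeps the sine and replaces `cos φ` by
`|cos φ|`, so it can only bring it closer to a point `α` of that interval, as measured by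
`1 - cos`. -/
lemma sq_sub_arcsin_sin_le (α φ : ℝ) (hα : α ∈ Set.Icc (-(π / 2)) (π / 2)) :
    (α - Real.arcsin (Real.sin φ)) ^ 2 ≤ π ^ 2 * ((1 - Real.cos (α - φ)) / 2) := by
  set β := Real.arcsin (Real.sin φ) with hβ
  have hβm : β ∈ Set.Icc (-(π / 2)) (π / 2) := Real.arcsin_mem_Icc _
  have hsin : Real.sin β = Real.sin φ :=
    Real.sin_arcsin (Real.neg_one_le_sin _) (Real.sin_le_one _)
  have hcos : Real.cos φ ≤ Real.cos β := by
    refine (le_abs_self _).trans (le_of_eq ?_)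
    rw [hβ, Real.cos_arcsin, ← Real.cos_sq', Real.sqrt_sq_eq_abs]
  have hαc : 0 ≤ Real.cos α := Real.cos_nonneg_of_mem_Icc hα
  have h1 : Real.cos (α - φ) ≤ Real.cos (α - β) := by
    rw [Real.cos_sub, Real.cos_sub, hsin]
    nlinarith
  have h2 : (α - β) ^ 2 ≤ π ^ 2 * ((1 - Real.cos (α - β)) / 2) := by
    have hj : 2 / π * |(α - β) / 2| ≤ Real.sin |(α - β) / 2| := by
      refine Real.mul_le_sin (abs_nonneg _) ?_
      rw [abs_le]
      constructor <;> linarith [hα.1, hα.2, hβm.1, hβm.2]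
    have hc : (1 - Real.cos (α - β)) / 2 = Real.sin |(α - β) / 2| ^ 2 := by
      have e : α - β = 2 * ((α - β) / 2) := by ring
      rw [Real.sin_sq, Real.cos_abs]
      nth_rw 1 [e]
      rw [Real.cos_two_mul]
      ring
    rw [hc, ← mul_pow]
    have h0 : |α - β| ≤ π * Real.sin |(α - β) / 2| := by
      have := mul_le_mul_of_nonneg_left hj Real.pi_pos.le
      rw [abs_div, abs_two] at this ⊢
      calc |α - β| = π * (2 / π * (|α - β| / 2)) := by
            field_simp
        _ ≤ _ := this
    rw [← sq_abs]
    gcongr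
  have := Real.pi_pos
  nlinarith [sq_nonneg π]

theorem stmt10 (r L : ℝ) (hr : 0 < r) (hL : 0 < L)
    (f : ℝ → ℝ)
    (hf : ∀ x ∈ Set.Icc (-r) r, ∀ y ∈ Set.Icc (-r) r, |f x - f y| ≤ L * |x - y|)
    (n : ℕ) (hn : 2 ≤ n) :
    ∃ (b : ℤ → ℂ) (w : ℤ → ℝ),
      (∀ t ∈ Set.Icc (-r) r,
          (∑ k ∈ Finset.Icc (-(n : ℤ)) n, b k * Complex.exp (Complex.I * (w k * t))).im = 0) ∧
      (∀ t ∈ Set.Icc (-r) r,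
          ‖(f t : ℂ) - ∑ k ∈ Finset.Icc (-(n : ℤ)) n, b k * Complex.exp (Complex.I * (w k * t))‖
            ≤ 3 * (1 + 2 * L ^ 2 * r ^ 2) * Real.log n / n) ∧
      (∀ k ∈ Finset.Icc (-(n : ℤ)) n, |w k| ≤ Real.pi * |(k : ℝ)| / r) ∧
      (∀ k ∈ Finset.Icc (-(n : ℤ)) n, ‖b k‖ ≤ ⨆ t : Set.Icc (-r) r, |f t|) := by
  obtain ⟨a, ha1, ha2⟩ := exists_weights n
  have hpi := Real.pi_pos
  set M : ℝ := ((n + 2 : ℕ) : ℝ) with hM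
  have hMpos : 0 < M := by rw [hM]; positivity
  have hMn : M = n + 2 := by rw [hM]; push_cast; ring
  set φ : ℕ → ℝ := fun j => 2 * π * j / M with hφ
  set τ : ℕ → ℝ := fun j => 2 * r / π * Real.arcsin (Real.sin (φ j)) with hτ
  set S : Finset (ℕ × ℕ) := range (n + 1) ×ˢ range (n + 1) with hS
  have hτm : ∀ j, τ j ∈ Set.Icc (-r) r := by
    intro j
    have h := Real.arcsin_mem_Icc (Real.sin (φ j))
    have hc : 0 < 2 * r / π := by positivity
    have e : 2 * r / π * (π / 2) = r := by field_simp
    constructor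
    · have := mul_le_mul_of_nonneg_left h.1 hc.le
      simp only [hτ]
      linarith
    · have := mul_le_mul_of_nonneg_left h.2 hc.le
      simp only [hτ]
      linarith
  set B : ℝ := ⨆ t : Set.Icc (-r) r, |f t| with hB
  have hBle : ∀ t ∈ Set.Icc (-r) r, |f t| ≤ B := by
    have hbdd : BddAbove (Set.range fun t : Set.Icc (-r) r => |f t|) := by
      refine ⟨|f 0| + L * r, ?_⟩
      rintro _ ⟨⟨t, ht⟩, rfl⟩
      have h1 := hf t ht 0 ⟨by linarith, hr.le⟩
      have h2 : |t - 0| ≤ r := by rw [sub_zero]; exact abs_le.2 ht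
      have h3 : |f t| ≤ |f 0| + |f t - f 0| := by
        have := abs_add_le (f 0) (f t - f 0)
        rwa [add_sub_cancel] at this
      have h4 := mul_le_mul_of_nonneg_left h2 hL.le
      simp only
      linarith
    intro t ht
    exact le_ciSup hbdd ⟨t, ht⟩
  set b : ℤ → ℂ := fun m =>
    ((M : ℂ)⁻¹ * ∑ j ∈ range (n + 2), (f (τ j) : ℂ) * ec m (-φ j)) *
      ∑ p ∈ S with (p.1 : ℤ) - p.2 = m, (a p.1 * a p.2 : ℂ) with hb
  set w : ℤ → ℝ := fun m => π * m / (2 * r) with hw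
  -- The network is the discrete convolution of the folded function with the kernel.
  have hq : ∀ t : ℝ, ∑ k ∈ Finset.Icc (-(n : ℤ)) n, b k * Complex.exp (Complex.I * (w k * t))
      = ((M⁻¹ * ∑ j ∈ range (n + 2), f (τ j) * fker n a (π * t / (2 * r) - φ j) : ℝ) : ℂ) := by
    intro t
    set α := π * t / (2 * r) with hα
    have hexp : ∀ k : ℤ, Complex.exp (Complex.I * (w k * t)) = ec k α := by
      intro k
      simp only [ec, hw, hα]
      push_cast
      congr 2
      ring
    simp_rw [hexp]
    push_cast
    simp_rw [fker_eq, ← hS]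
    have hmaps : ∀ p ∈ S, (p.1 : ℤ) - p.2 ∈ Finset.Icc (-(n : ℤ)) n := by
      intro p hp
      simp only [hS, mem_product, mem_range] at hp
      rw [Finset.mem_Icc]
      omega
    have hfib : ∀ j : ℕ, ∑ p ∈ S, (a p.1 * a p.2 : ℂ) * ec ((p.1 : ℤ) - p.2) (α - φ j)
        = ∑ m ∈ Finset.Icc (-(n : ℤ)) n,
          (∑ p ∈ S with (p.1 : ℤ) - p.2 = m, (a p.1 * a p.2 : ℂ)) * (ec m α * ec m (-φ j)) := by
      intro j
      rw [← sum_fiberwise_of_maps_to hmaps]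
      refine sum_congr rfl fun m _ => ?_
      rw [sum_mul]
      refine sum_congr rfl fun p hp => ?_
      rw [(mem_filter.1 hp).2, ec_sub]
    simp_rw [hfib, mul_sum]
    rw [sum_comm]
    refine sum_congr rfl fun m _ => ?_
    simp only [hb]
    rw [mul_assoc, mul_assoc, sum_mul, mul_sum]
    refine sum_congr rfl fun j _ => ?_
    ring
  refine ⟨b, w, ?_, ?_, ?_, ?_⟩
  · intro t _
    rw [hq, Complex.ofReal_im]
  · intro t ht
    rw [hq, ← Complex.ofReal_sub, Complex.norm_real, Real.norm_eq_abs]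
    set α := π * t / (2 * r) with hα
    have hαm : α ∈ Set.Icc (-(π / 2)) (π / 2) := by
      rw [hα]
      constructor
      · rw [le_div_iff₀ (by positivity)]
        nlinarith [ht.1]
      · rw [div_le_iff₀ (by positivity)]
        nlinarith [ht.2]
    have htα : t = 2 * r / π * α := by rw [hα]; field_simp
    set κ : ℕ → ℝ := fun j => fker n a (α - φ j) with hκ
    have hκ0 : ∀ j, 0 ≤ κ j := fun j => fker_nonneg _ _ _
    have hκ1 : ∑ j ∈ range (n + 2), κ j = M := by
      have := sum_fker n a α
      rw [ha1, mul_one] at this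
      exact this
    have hκ2 : ∑ j ∈ range (n + 2), κ j * Real.cos (α - φ j) = M * Real.cos (π / M) := by
      have := sum_fker_cos n a α
      rw [ha2, ← hMn] at this
      exact this
    set β : ℕ → ℝ := fun j => Real.arcsin (Real.sin (φ j)) with hβ
    set δ : ℝ := π ^ 2 / (2 * M) with hδ
    have hδ0 : 0 < δ := by positivity
    have hvar : ∑ j ∈ range (n + 2), κ j * (α - β j) ^ 2 ≤ M * δ ^ 2 := by
      calc ∑ j ∈ range (n + 2), κ j * (α - β j) ^ 2
          ≤ ∑ j ∈ range (n + 2), π ^ 2 / 2 * (κ j - κ j * Real.cos (α - φ j)) := by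
            refine sum_le_sum fun j _ => ?_
            have := mul_le_mul_of_nonneg_left (sq_sub_arcsin_sin_le α (φ j) hαm) (hκ0 j)
            calc _ ≤ _ := this
              _ = _ := by ring
        _ = π ^ 2 / 2 * (M - M * Real.cos (π / M)) := by
            rw [← mul_sum, sum_sub_distrib, hκ1, hκ2]
        _ ≤ π ^ 2 / 2 * (M * ((π / M) ^ 2 / 2)) := by
            have := Real.one_sub_sq_div_two_le_cos (x := π / M)
            have h2 : 1 - Real.cos (π / M) ≤ (π / M) ^ 2 / 2 := by linarith
            have h3 := mul_le_mul_of_nonneg_left h2 hMpos.le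
            gcongr
            linarith
        _ = M * δ ^ 2 := by
            rw [hδ]
            field_simp
    have hmean : ∑ j ∈ range (n + 2), κ j * |α - β j| ≤ M * δ := by
      -- `2 δ |x| ≤ x² + δ²` replaces the Cauchy–Schwarz inequality.
      have h1 : ∑ j ∈ range (n + 2), 2 * δ * (κ j * |α - β j|)
          ≤ ∑ j ∈ range (n + 2), (κ j * (α - β j) ^ 2 + δ ^ 2 * κ j) := by
        refine sum_le_sum fun j _ => ?_
        have : 2 * δ * |α - β j| ≤ (α - β j) ^ 2 + δ ^ 2 := by
          rw [← sq_abs (α - β j)]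
          nlinarith [sq_nonneg (|α - β j| - δ)]
        nlinarith [hκ0 j]
      rw [← mul_sum, sum_add_distrib, ← mul_sum, hκ1] at h1
      have h2 : 2 * δ * ∑ j ∈ range (n + 2), κ j * |α - β j| ≤ 2 * δ * (M * δ) := by
        nlinarith
      exact le_of_mul_le_mul_left h2 (by positivity)
    have herr : |f t - M⁻¹ * ∑ j ∈ range (n + 2), f (τ j) * κ j| ≤ π * (L * r) / M := by
      have e1 : f t - M⁻¹ * ∑ j ∈ range (n + 2), f (τ j) * κ j
          = M⁻¹ * ∑ j ∈ range (n + 2), (f t - f (τ j)) * κ j := by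
        simp_rw [sub_mul]
        rw [sum_sub_distrib, ← mul_sum, hκ1]
        field_simp
      rw [e1, abs_mul, abs_of_pos (inv_pos.2 hMpos)]
      calc M⁻¹ * |∑ j ∈ range (n + 2), (f t - f (τ j)) * κ j|
          ≤ M⁻¹ * ∑ j ∈ range (n + 2), L * (2 * r / π) * (κ j * |α - β j|) := by
            gcongr
            refine (abs_sum_le_sum_abs _ _).trans (sum_le_sum fun j _ => ?_)
            rw [abs_mul, abs_of_nonneg (hκ0 j)]
            have h1 := hf t ht (τ j) (hτm j)
            have h2 : |t - τ j| = 2 * r / π * |α - β j| := by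
              have : t - τ j = 2 * r / π * (α - β j) := by
                rw [htα]
                simp only [hτ, hβ]
                ring
              rw [this, abs_mul, abs_of_pos (by positivity : 0 < 2 * r / π)]
            rw [h2] at h1
            calc _ ≤ L * (2 * r / π * |α - β j|) * κ j :=
                  mul_le_mul_of_nonneg_right h1 (hκ0 j)
              _ = _ := by ring
        _ ≤ M⁻¹ * (L * (2 * r / π) * (M * δ)) := by
            rw [← mul_sum]
            gcongr
        _ = π * (L * r) / M := by
            rw [hδ]
            field_simp
    refine herr.trans ?_
    have hn2 : (2 : ℝ) ≤ n := by exact_mod_cast hn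
    have hlog : 0.69 ≤ Real.log n := by
      have h1 := Real.log_le_log (by norm_num) hn2
      have h2 := Real.log_two_gt_d9
      linarith
    have hx : 0 < L * r := by positivity
    have hnum : π * (L * r) ≤ 3 * (1 + 2 * L ^ 2 * r ^ 2) * Real.log n := by
      have h1 : π * (L * r) ≤ 3.15 * (L * r) :=
        mul_le_mul_of_nonneg_right Real.pi_lt_d2.le hx.le
      have h2 : 2 * (L * r) ≤ 1 + 2 * L ^ 2 * r ^ 2 := by
        nlinarith [sq_nonneg (L * r - 1), sq_nonneg (L * r)]
      have h3 : 3 * (1 + 2 * L ^ 2 * r ^ 2) * 0.69 ≤ 3 * (1 + 2 * L ^ 2 * r ^ 2) * Real.log n := by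
        gcongr
      linarith
    have hlog0 : 0 ≤ Real.log n := by linarith
    calc π * (L * r) / M ≤ π * (L * r) / n := by
          gcongr
          linarith
      _ ≤ _ := by gcongr
  · intro k _
    simp only [hw]
    rw [abs_div, abs_mul, abs_of_pos hpi, abs_of_pos (by positivity : 0 < 2 * r)]
    gcongr
    linarith
  · intro m _
    simp only [hb]
    have h1 : ‖(M : ℂ)⁻¹ * ∑ j ∈ range (n + 2), (f (τ j) : ℂ) * ec m (-φ j)‖ ≤ B := by
      rw [norm_mul, norm_inv, Complex.norm_real, Real.norm_eq_abs, abs_of_pos hMpos,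
        inv_mul_le_iff₀ hMpos]
      calc _ ≤ ∑ j ∈ range (n + 2), B := by
            refine norm_sum_le_of_le _ fun j _ => ?_
            rw [norm_mul, norm_ec, mul_one, Complex.norm_real, Real.norm_eq_abs]
            exact hBle _ (hτm j)
        _ = M * B := by
            rw [sum_const, card_range, nsmul_eq_mul]
    have h2 : ‖∑ p ∈ S with (p.1 : ℤ) - p.2 = m, (a p.1 * a p.2 : ℂ)‖ ≤ 1 := by
      refine (norm_sum_le_of_le _ fun p _ => ?_).trans (sum_fiber_le n a ha1 m)
      rw [← Complex.ofReal_mul, Complex.norm_real, Real.norm_eq_abs]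
    have hB0 : 0 ≤ B := (norm_nonneg _).trans h1
    rw [norm_mul]
    calc _ ≤ B * 1 := mul_le_mul h1 h2 (norm_nonneg _) hB0
      _ = B := mul_one B
end

section
/- Let f : ℝ^d → ℂ be an L-hidden-layer network f(x) = (a^{(L+1)})ᵀ x^{(L)}(x), where x^{(0)}(x) = x, x^{(k)}(x) = σ^{(k)}(A^{(k)} x^{(k−1)}(x)) for k ∈ [L], each σ^{(k)} : ℝ^{d_k} → ℝ^{d_k} acts component-wise by (1/6)-Lipschitz functions vanishing at 0, each A^{(k)} ∈ ℝ^{d_k × d_{k−1}} satisfies ‖A^{(k)}‖_{∞→∞} ≤ 1 (every row has ℓ¹ norm at most 1), and a^{(L+1)} ∈ ℂ^{d_L} with ‖a^{(L+1)}‖₁ ≤ 1. Then for every ε > 0 and all integers N₁, …, N_L with N_k ≥ L/ε + (L − 1) for each k, there exist component-wise polynomial maps p^{(k)} : ℝ^{d_k} → ℝ^{d_k} of degree at most N_k such that the network f_{N₁,…,N_L}(x) = (a^{(L+1)})ᵀ y^{(L)}(x), defined by y^{(0)}(x) = x and y^{(k)}(x) = p^{(k)}(A^{(k)} y^{(k−1)}(x)),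 satisfies sup_{‖x‖_∞ ≤ 1} |f(x) − f_{N₁,…,N_L}(x)| ≤ ε. -/
/-!
The analytic input is Jackson's theorem with an explicit constant: a `c`-Lipschitz function on
`[-1, 1]` is approximated by polynomials of degree at most `N` within `6 c / N` (`jackson`). With
`c = 1/6` the constants cancel, so after rescaling the error on `[-R, R]` is at most `R / N`
(`jackson_interval`).

Jackson's theorem is proved with a discrete convolution. For `m = N + 1` and
`q(z) = ∑_{k < m} k (m - k) z^k`, the kernel `ker m u = |q(e^{iu})|²` is nonnegative. By the
discrete Parseval identity (`parseval`) its mean over rotated equispaced nodes `t_j = 2πj/m` is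
`∑ (k (m - k))²`. Multiplying by `2 - 2 cos u = |1 - e^{iu}|²` turns the coefficients into their
differences, so a second use of Parseval gives the second moment; the ratio of the two sums is
`10 / (m² + 1) ≤ (4 / m)²`. As `|cos θ - cos t| ≤ |1 - e^{i(θ ± t)}|`, averaging `g (cos t_j)`
with weights proportional to `ker m (θ + t_j) + ker m (θ - t_j)` reproduces `g (cos θ)` up to
`4 c / m`, and these weights are polynomials in `cos θ` of degree at most `m - 1 = N`
(`kerPoly`).

For networks, the claim is by induction on the layer: the two networks differ by at most `k ε / L`
in layer `k`. The exact layers stay in `[-1, 1]`, so the arguments of the `(k+1)`-st polynomials lie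
in `[-R, R]` with `R = 1 + k ε / L`, and the condition on the degrees gives `R / N ≤ ε / L`; the
earlier error is not amplified, as the activations are `1/6`-Lipschitz and the rows of the weight
matrices have `ℓ¹` norm at most `1`.
-/

open Real Finset

/-- The layers of a feed-forward network: `layerRec dims A act k x` is the output of the
`k`-th layer on input `x`, where `A k` is the weight matrix and `act k` the component-wise
activation of the `(k+1)`-st layer. -/
noncomputable def layerRec (dims : ℕ → ℕ)
    (A : (k : ℕ) → Fin (dims (k + 1)) → Fin (dims k) → ℝ)
    (act : (k : ℕ) → Fin (dims (k + 1)) → ℝ → ℝ) :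
    (k : ℕ) → (Fin (dims 0) → ℝ) → Fin (dims k) → ℝ
  | 0 => fun x => x
  | (k + 1) => fun x i => act k i (∑ j, A k i j * layerRec dims A act k x j)

/-! ### Finite sums and the discrete Parseval identity -/

lemma sum_b (m : ℝ) (r : ℕ) : ∑ k ∈ range r, ((k:ℝ)*(m-k))^2 = (r-1)*r*(2*r-1)/6*m^2 - 2*m*((r-1)*r/2)^2 + (r-1)*r*(2*r-1)*(3*r^2-3*r-1)/30 := by
  induction r with
  | zero => simp
  | succ r ih => rw [sum_range_succ, ih]; push_cast; ring

lemma sum_c (m : ℝ) (r : ℕ) : ∑ k ∈ range r, (m-1-2*(k:ℝ))^2 = r*(m-1)^2 - 2*(m-1)*((r-1)*r) + 4*((r-1)*r*(2*r-1)/6) := by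
  induction r with
  | zero => simp
  | succ r ih => rw [sum_range_succ, ih]; push_cast; ring

/-- Summation by parts for the sequence `k ↦ k (m - k)`, whose increments are `m - 1 - 2 k`. The
boundary term vanishes at `r = m`. -/
lemma one_sub_mul_sum (m z : ℂ) (r : ℕ) : (1 - z) * ∑ k ∈ range r, ((k:ℂ)*(m-k)) * z^k
    = z * ∑ k ∈ range r, (m-1-2*(k:ℂ)) * z^k - r*(m-r)*z^r := by
  induction r with
  | zero => simp
  | succ r ih => rw [sum_range_succ, sum_range_succ, mul_add, ih]; push_cast; ring

lemma normSq_trig (m : ℕ) (b : ℕ → ℝ) (u : ℝ) :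
    ‖∑ k ∈ range m, (b k : ℂ) * Complex.exp (u * Complex.I) ^ k‖^2
      = ∑ k ∈ range m, ∑ l ∈ range m, b k * b l * cos (((k:ℤ) - (l:ℤ) : ℤ) * u) := by
  have h : ∀ k : ℕ, Complex.exp (u * Complex.I) ^ k = (cos (k*u) : ℝ) + (sin (k*u) : ℝ) * Complex.I := by
    intro k
    rw [← Complex.exp_nat_mul, ← mul_assoc]
    have := Complex.exp_mul_I (((k * u : ℝ)) : ℂ)
    push_cast at this ⊢
    rw [this]
  have h2 : ∑ k ∈ range m, (b k : ℂ) * Complex.exp (u * Complex.I) ^ k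
      = (∑ k ∈ range m, b k * cos (k*u) : ℝ) + (∑ k ∈ range m, b k * sin (k*u) : ℝ) * Complex.I := by
    simp_rw [h]; push_cast; rw [sum_mul, ← sum_add_distrib]
    exact sum_congr rfl fun k _ => by ring
  rw [h2, Complex.sq_norm, Complex.normSq_add_mul_I, sq, sq, sum_mul_sum, sum_mul_sum, ← sum_add_distrib]
  refine sum_congr rfl fun k _ => ?_
  rw [← sum_add_distrib]
  refine sum_congr rfl fun l _ => ?_
  push_cast
  rw [sub_mul, cos_sub]; ring

/-- Orthogonality of the characters of `ℤ/m`, in real form: averaging a frequency `d` with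
`|d| < m` over `m` equispaced points of the circle leaves only the constant term. The unit `s`
is a sign, so that both rotation directions are covered. -/
lemma sum_cos (m : ℕ) (hm : m ≠ 0) (d : ℤ) (hd : d.natAbs < m) (θ : ℝ) (s : ℤˣ) :
    ∑ j ∈ range m, cos (d * (θ + (s:ℤ) * (2*π*j/m))) = if d = 0 then (m:ℝ) else 0 := by
  split_ifs with h
  · simp [h]
  · have hm' : (m:ℂ) ≠ 0 := by exact_mod_cast hm
    set ζ : ℂ := Complex.exp (2*π*Complex.I/m) with hζ
    have hp : IsPrimitiveRoot ζ m := Complex.isPrimitiveRoot_exp m hm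
    set w : ℂ := ζ ^ (d * (s:ℤ)) with hw
    have hw1 : w ≠ 1 := by
      intro h1
      rw [hw, hp.zpow_eq_one_iff_dvd] at h1
      have h1' : (m:ℤ) ∣ d := (s.isUnit.dvd_mul_right).1 h1
      have := Int.eq_zero_of_dvd_of_natAbs_lt_natAbs h1' (by simpa using hd)
      exact h this
    have hwm : w ^ m = 1 := by
      rw [hw, ← zpow_natCast, ← zpow_mul, mul_comm, zpow_mul, zpow_natCast, hp.pow_eq_one, one_zpow]
    have hg : ∑ j ∈ range m, w ^ j = 0 := by
      rw [geom_sum_eq hw1, hwm]; simp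
    have e : ∀ j ∈ range m, cos (d * (θ + (s:ℤ) * (2*π*j/m))) = (Complex.exp (d*θ*Complex.I) * w ^ j).re := by
      intro j _
      rw [hw, hζ, ← Complex.exp_int_mul, ← Complex.exp_nat_mul, ← Complex.exp_add]
      rw [show (d:ℂ)*θ*Complex.I + j * (((d * (s:ℤ) : ℤ):ℂ) * (2*π*Complex.I/m)) = ((d * (θ + (s:ℤ) * (2*π*j/m)) : ℝ) : ℂ) * Complex.I by
        push_cast; ring]
      rw [Complex.exp_ofReal_mul_I_re]
    rw [sum_congr rfl e, ← Complex.re_sum, ← mul_sum, hg]; simp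

/-- Discrete Parseval identity: the mean over `m` equispaced points of `|q|²`, for a polynomial `q`
with `m` coefficients on the unit circle, is the sum of the squared coefficients. -/
lemma parseval (m : ℕ) (hm : m ≠ 0) (b : ℕ → ℝ) (θ : ℝ) (s : ℤˣ) :
    ∑ j ∈ range m, ‖∑ k ∈ range m, (b k : ℂ) *
        Complex.exp ((θ + (s:ℤ) * (2*π*j/m) : ℝ) * Complex.I) ^ k‖^2 = m * ∑ k ∈ range m, b k ^ 2 := by
  simp_rw [normSq_trig]
  rw [sum_comm, mul_sum]
  refine sum_congr rfl fun k hk => ?_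
  rw [sum_comm]
  simp_rw [← mul_sum]
  rw [sum_eq_single k]
  · rw [sum_cos m hm _ (by simp; omega)]; simp; ring
  · intro l hl hlk
    rw [mem_range] at hk hl
    rw [sum_cos m hm _ (by omega), if_neg (by omega)]; simp
  · intro h; exact absurd hk h

/-! ### The kernel and its moments -/

/-- The unnormalised Jackson-type kernel `|∑_{k < m} k (m - k) e^{iku}|²`, a nonnegative
trigonometric polynomial of degree at most `m - 1`. -/
noncomputable def ker (m : ℕ) (u : ℝ) : ℝ :=
  ‖∑ k ∈ range m, (((k:ℝ) * (m - k) : ℝ) : ℂ) * Complex.exp (u * Complex.I) ^ k‖ ^ 2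

/-- The mean of `ker m` over the circle, that is, the sum of the squares of its coefficients. -/
noncomputable def mass (m : ℕ) : ℝ := ∑ k ∈ range m, ((k:ℝ) * (m - k)) ^ 2

lemma sum_ker (m : ℕ) (hm : m ≠ 0) (θ : ℝ) (s : ℤˣ) :
    ∑ j ∈ range m, ker m (θ + (s:ℤ) * (2*π*j/m)) = m * mass m :=
  parseval m hm (fun k => (k:ℝ) * (m - k)) θ s

/-- Since `2 - 2 cos u = |1 - e^{iu}|²`, multiplying the kernel by `2 - 2 cos u` replaces its
coefficients by their differences. -/
lemma two_sub_mul_ker (m : ℕ) (u : ℝ) :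
    (2 - 2 * cos u) * ker m u =
      ‖∑ k ∈ range m, ((m - 1 - 2 * (k:ℝ) : ℝ) : ℂ) * Complex.exp (u * Complex.I) ^ k‖ ^ 2 := by
  have h := one_sub_mul_sum m (Complex.exp (u * Complex.I)) m
  rw [sub_self, mul_zero, zero_mul, sub_zero] at h
  have h1 : ‖1 - Complex.exp (u * Complex.I)‖ ^ 2 = 2 - 2 * cos u := by
    rw [Complex.sq_norm, Complex.normSq_apply]
    simp only [Complex.sub_re, Complex.sub_im, Complex.one_re, Complex.one_im,
      Complex.exp_ofReal_mul_I_re, Complex.exp_ofReal_mul_I_im]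
    nlinarith [sin_sq_add_cos_sq u]
  rw [ker, ← h1, ← mul_pow, ← norm_mul]
  push_cast
  rw [h, norm_mul, Complex.norm_exp_ofReal_mul_I, one_mul]

lemma sum_two_sub_mul_ker (m : ℕ) (hm : m ≠ 0) (θ : ℝ) (s : ℤˣ) :
    ∑ j ∈ range m, (2 - 2 * cos (θ + (s:ℤ) * (2*π*j/m))) * ker m (θ + (s:ℤ) * (2*π*j/m))
      = m * ∑ k ∈ range m, (m - 1 - 2 * (k:ℝ)) ^ 2 := by
  simp_rw [two_sub_mul_ker]
  exact parseval m hm (fun k => m - 1 - 2 * (k:ℝ)) θ s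

lemma mass_eq (m : ℕ) : mass m = m * ((m:ℝ) ^ 4 - 1) / 30 := by
  rw [mass, sum_b]; ring

lemma mass_pos {m : ℕ} (hm : 2 ≤ m) : 0 < mass m := by
  rw [mass_eq]
  have : (1:ℝ) < m := by exact_mod_cast hm
  have : 1 < (m:ℝ) ^ 4 := one_lt_pow₀ this (by norm_num)
  have : 0 < (m:ℝ) ^ 4 - 1 := by linarith
  positivity

/-- The second moment of the kernel is at most `(4 / m)²` times its mass; the exact ratio is
`10 / (m² + 1)`. -/
lemma moment_le {m : ℕ} (hm : 2 ≤ m) :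
    ∑ k ∈ range m, (m - 1 - 2 * (k:ℝ)) ^ 2 ≤ (4 / m) ^ 2 * mass m := by
  have : (1:ℝ) < m := by exact_mod_cast hm
  rw [sum_c, mass_eq]
  have e : (4 / (m:ℝ)) ^ 2 * (m * ((m:ℝ) ^ 4 - 1) / 30) = 8 / 15 * ((m:ℝ) ^ 4 - 1) / m := by
    field_simp; ring
  rw [e, le_div_iff₀ (by linarith)]
  have : 1 < (m:ℝ) ^ 2 := one_lt_pow₀ this (by norm_num)
  nlinarith

lemma sq_cos_sub_cos_le (θ t : ℝ) : (cos θ - cos t) ^ 2 ≤ 2 - 2 * cos (θ - t) := by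
  rw [cos_sub]
  nlinarith [sin_sq_add_cos_sq θ, sin_sq_add_cos_sq t, sq_nonneg (sin θ - sin t)]

/-- First-moment bound for the kernel, in the variable `cos`, obtained from the second moment by
the arithmetic-geometric mean inequality. -/
lemma sum_ker_mul_abs_le {m : ℕ} (hm : 2 ≤ m) (θ : ℝ) (s : ℤˣ) :
    ∑ j ∈ range m, ker m (θ + (s:ℤ) * (2*π*j/m)) * |cos θ - cos (2*π*j/m)|
      ≤ 4 / m * (m * mass m) := by
  have hm0 : m ≠ 0 := by omega
  have hmp : (0:ℝ) < m := by positivity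
  set δ : ℝ := 4 / m with hδ
  have hδ0 : 0 < δ := by positivity
  have key : ∀ j ∈ range m, ker m (θ + (s:ℤ) * (2*π*j/m)) * |cos θ - cos (2*π*j/m)| ≤
      δ / 2 * ker m (θ + (s:ℤ) * (2*π*j/m)) + 1 / (2 * δ) *
        ((2 - 2 * cos (θ + (s:ℤ) * (2*π*j/m))) * ker m (θ + (s:ℤ) * (2*π*j/m))) := by
    intro j _
    have hk : 0 ≤ ker m (θ + (s:ℤ) * (2*π*j/m)) := sq_nonneg _
    have hc : (cos θ - cos (2*π*j/m)) ^ 2 ≤ 2 - 2 * cos (θ + (s:ℤ) * (2*π*j/m)) := by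
      rcases Int.units_eq_one_or s with rfl | rfl
      · simpa using sq_cos_sub_cos_le θ (-(2*π*j/m))
      · simpa [← sub_eq_add_neg] using sq_cos_sub_cos_le θ (2*π*j/m)
    have ha : |cos θ - cos (2*π*j/m)| ≤
        δ / 2 + 1 / (2 * δ) * (2 - 2 * cos (θ + (s:ℤ) * (2*π*j/m))) := by
      have h1 : |cos θ - cos (2*π*j/m)| ≤ δ / 2 + 1 / (2 * δ) * |cos θ - cos (2*π*j/m)| ^ 2 := by
        have : 0 ≤ 1 / (2 * δ) * (|cos θ - cos (2*π*j/m)| - δ) ^ 2 := by positivity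
        have e : 1 / (2 * δ) * (|cos θ - cos (2*π*j/m)| - δ) ^ 2 =
          δ / 2 + 1 / (2 * δ) * |cos θ - cos (2*π*j/m)| ^ 2 - |cos θ - cos (2*π*j/m)| := by
          field_simp; ring
        linarith
      rw [sq_abs] at h1
      have := mul_le_mul_of_nonneg_left hc (by positivity : 0 ≤ 1 / (2 * δ))
      linarith
    calc _ ≤ _ := mul_le_mul_of_nonneg_left ha hk
      _ = _ := by ring
  refine (sum_le_sum key).trans ?_
  rw [sum_add_distrib, ← mul_sum, ← mul_sum, sum_ker m hm0, sum_two_sub_mul_ker m hm0]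
  have h2 := moment_le hm
  rw [← hδ] at h2
  have h3 : 1 / (2 * δ) * (m * ∑ k ∈ range m, (m - 1 - 2 * (k:ℝ)) ^ 2) ≤
      1 / (2 * δ) * (m * (δ ^ 2 * mass m)) := by gcongr
  have e : 1 / (2 * δ) * (m * (δ ^ 2 * mass m)) = δ / 2 * (m * mass m) := by field_simp
  linarith

/-! ### Jackson's theorem -/

open Polynomial in
/-- The polynomial `p` with `p (cos θ) = ker m (θ + t) + ker m (θ - t)`, written in the
Chebyshev basis. -/
noncomputable def kerPoly (m : ℕ) (t : ℝ) : ℝ[X] :=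
  ∑ k ∈ range m, ∑ l ∈ range m,
    C (2 * ((k:ℝ) * (m - k)) * ((l:ℝ) * (m - l)) * cos (((k:ℤ) - (l:ℤ) : ℤ) * t)) *
      Chebyshev.T ℝ ((k:ℤ) - (l:ℤ))

lemma eval_kerPoly (m : ℕ) (t θ : ℝ) :
    (kerPoly m t).eval (cos θ) = ker m (θ + t) + ker m (θ - t) := by
  simp only [kerPoly, ker, normSq_trig, Polynomial.eval_finsetSum, Polynomial.eval_mul,
    Polynomial.eval_C, Polynomial.Chebyshev.T_real_cos, ← sum_add_distrib]
  refine sum_congr rfl fun k _ => sum_congr rfl fun l _ => ?_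
  rw [mul_add _ θ t, mul_sub _ θ t, cos_add, cos_sub]; ring

lemma natDegree_kerPoly_le (m : ℕ) (t : ℝ) : (kerPoly m t).natDegree ≤ m - 1 := by
  refine Polynomial.natDegree_sum_le_of_forall_le _ _ fun k hk =>
    Polynomial.natDegree_sum_le_of_forall_le _ _ fun l hl => ?_
  refine (Polynomial.natDegree_C_mul_le _ _).trans ?_
  rw [Polynomial.Chebyshev.natDegree_T]
  rw [mem_range] at hk hl
  omega

open Polynomial in
/-- Jackson's theorem on `[-1, 1]` for a `c`-Lipschitz function: degree `N` gives error at most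
`6 c / N`. -/
lemma jackson (N : ℕ) (hN : 1 ≤ N) (c : ℝ) (hc : 0 ≤ c) (g : ℝ → ℝ)
    (hg : ∀ x y, |g x - g y| ≤ c * |x - y|) :
    ∃ p : ℝ[X], p.natDegree ≤ N ∧ ∀ x, |x| ≤ 1 → |g x - p.eval x| ≤ 6 * c / N := by
  set m := N + 1 with hm
  have hm2 : 2 ≤ m := by omega
  have hS := mass_pos hm2
  have hmp : (0:ℝ) < m := by positivity
  -- `g` averaged over the nodes `cos (2πj/m)`; the weight `kerPoly / (2 m mass)` is nonnegative on
  -- `[-1, 1]` and the weights sum to `1`.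
  refine ⟨∑ j ∈ range m, C (g (cos (2*π*j/m)) / (2 * (m * mass m))) * kerPoly m (2*π*j/m), ?_, ?_⟩
  · refine natDegree_sum_le_of_forall_le _ _ fun j _ => ?_
    exact (natDegree_C_mul_le _ _).trans (natDegree_kerPoly_le m _)
  · intro x hx
    obtain ⟨hx1, hx2⟩ := abs_le.1 hx
    obtain ⟨θ, rfl⟩ : ∃ θ, x = cos θ := ⟨arccos x, (cos_arccos hx1 hx2).symm⟩
    have p1 := sum_ker m (by omega) θ 1
    have p2 := sum_ker m (by omega) θ (-1)
    have b1 := sum_ker_mul_abs_le hm2 θ 1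
    have b2 := sum_ker_mul_abs_le hm2 θ (-1)
    simp only [Units.val_one, Int.cast_one, one_mul, Units.val_neg, Int.cast_neg, neg_mul,
      ← sub_eq_add_neg] at p1 p2 b1 b2
    have e : g (cos θ) - eval (cos θ) (∑ j ∈ range m,
          C (g (cos (2*π*j/m)) / (2 * (m * mass m))) * kerPoly m (2*π*j/m))
        = (∑ j ∈ range m, (ker m (θ + 2*π*j/m) + ker m (θ - 2*π*j/m)) *
            (g (cos θ) - g (cos (2*π*j/m)))) / (2 * (m * mass m)) := by
      simp only [mul_sub, sum_sub_distrib, ← sum_mul, sum_add_distrib, p1, p2]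
      rw [sub_div, eval_finsetSum, sum_div]
      congr 1
      · field_simp; ring
      · refine sum_congr rfl fun j _ => ?_
        rw [eval_mul, eval_C, eval_kerPoly]; ring
    rw [e, abs_div, abs_of_pos (by positivity : 0 < 2 * (m * mass m)), div_le_iff₀ (by positivity)]
    have h4 : ∑ j ∈ range m, |(ker m (θ + 2*π*j/m) + ker m (θ - 2*π*j/m)) *
            (g (cos θ) - g (cos (2*π*j/m)))| ≤
        c * (∑ j ∈ range m, ker m (θ + 2*π*j/m) * |cos θ - cos (2*π*j/m)|
          + ∑ j ∈ range m, ker m (θ - 2*π*j/m) * |cos θ - cos (2*π*j/m)|) := by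
      rw [← sum_add_distrib, mul_sum]
      refine sum_le_sum fun j _ => ?_
      have k0 : 0 ≤ ker m (θ + 2*π*j/m) + ker m (θ - 2*π*j/m) :=
        add_nonneg (sq_nonneg _) (sq_nonneg _)
      rw [abs_mul, abs_of_nonneg k0]
      calc _ ≤ _ := mul_le_mul_of_nonneg_left (hg _ _) k0
        _ = _ := by ring
    have h5 := mul_le_mul_of_nonneg_left (add_le_add b1 b2) hc
    have h6 : (4:ℝ) / m ≤ 6 / N := by
      have : (0:ℝ) < N := by exact_mod_cast hN
      rw [div_le_div_iff₀ hmp this, hm]; push_cast; linarith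
    have h7 : c * (4 / m * (m * mass m) + 4 / m * (m * mass m)) ≤ 6 * c / N * (2 * (m * mass m)) := by
      have := mul_le_mul_of_nonneg_left h6 (by positivity : 0 ≤ c * (2 * (m * mass m)))
      calc _ = c * (2 * (m * mass m)) * (4 / m) := by ring
        _ ≤ _ := this
        _ = _ := by ring
    exact (abs_sum_le_sum_abs _ _).trans (h4.trans (h5.trans h7))

open Polynomial in
/-- The rescaled form of `jackson`: on `[-R, R]`, a `1/6`-Lipschitz function is within `R / N` of
a polynomial of degree at most `N`. -/
lemma jackson_interval (N : ℕ) (hN : 1 ≤ N) (R : ℝ) (hR : 0 < R) (g : ℝ → ℝ)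
    (hg : LipschitzWith (1 / 6 : NNReal) g) :
    ∃ p : ℝ[X], p.natDegree ≤ N ∧ ∀ x, |x| ≤ R → |g x - p.eval x| ≤ R / N := by
  obtain ⟨p, hp, h⟩ := jackson N hN (R / 6) (by positivity) (fun t => g (R * t)) (by
    intro x y
    have := hg.dist_le_mul (R * x) (R * y)
    rw [Real.dist_eq, Real.dist_eq, ← mul_sub, abs_mul, abs_of_pos hR] at this
    push_cast at this
    linarith)
  refine ⟨p.comp (C R⁻¹ * X), ?_, fun x hx => ?_⟩
  · rw [natDegree_comp, natDegree_C_mul_X _ (inv_ne_zero hR.ne'), mul_one]; exact hp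
  · have := h (R⁻¹ * x) (by
      rw [abs_mul, abs_inv, abs_of_pos hR, inv_mul_le_iff₀ hR]; linarith)
    rw [mul_inv_cancel_left₀ hR.ne'] at this
    rw [eval_comp, eval_mul, eval_C, eval_X]
    calc _ ≤ _ := this
      _ = _ := by ring

/-! ### Networks -/

/-- An `ℓ¹`-bounded combination of reals bounded by `B` is bounded by `B`. -/
lemma abs_sum_mul_le {n : ℕ} (w v : Fin n → ℝ) (hw : ∑ j, |w j| ≤ 1) (B : ℝ) (hB : 0 ≤ B)
    (hv : ∀ j, |v j| ≤ B) : |∑ j, w j * v j| ≤ B := by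
  calc |∑ j, w j * v j| ≤ ∑ j, |w j| * B := by
        refine (abs_sum_le_sum_abs _ _).trans (sum_le_sum fun j _ => ?_)
        rw [abs_mul]
        exact mul_le_mul_of_nonneg_left (hv j) (abs_nonneg _)
    _ ≤ B := by rw [← sum_mul]; nlinarith

theorem stmt17 (L : ℕ) (hL : 1 ≤ L) (dims : ℕ → ℕ) (hdims : ∀ k, 1 ≤ dims k)
    (A : (k : ℕ) → Fin (dims (k + 1)) → Fin (dims k) → ℝ)
    (σ : (k : ℕ) → Fin (dims (k + 1)) → ℝ → ℝ)
    (hσ_lip : ∀ k, k < L → ∀ i, LipschitzWith (1 / 6 : NNReal) (σ k i))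
    (hσ0 : ∀ k, k < L → ∀ i, σ k i 0 = 0)
    (hA : ∀ k, k < L → ∀ i, ∑ j, |A k i j| ≤ 1)
    (a : Fin (dims L) → ℂ) (ha : ∑ i, ‖a i‖ ≤ 1)
    (ε : ℝ) (hε : 0 < ε)
    (Nk : ℕ → ℕ) (hNk : ∀ k, k < L → (L : ℝ) / ε + ((L : ℝ) - 1) ≤ (Nk k : ℝ)) :
    ∃ P : (k : ℕ) → Fin (dims (k + 1)) → Polynomial ℝ,
      (∀ k, k < L → ∀ i, (P k i).natDegree ≤ Nk k) ∧
      ∀ x : Fin (dims 0) → ℝ, (∀ j, |x j| ≤ 1) →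
        ‖(∑ i, a i * (layerRec dims A σ L x i : ℂ)) -
            ∑ i, a i * (layerRec dims A (fun k i t => (P k i).eval t) L x i : ℂ)‖ ≤ ε := by
  have hL1 : (1:ℝ) ≤ L := by exact_mod_cast hL
  have hpos : ∀ k, k < L → (0:ℝ) < Nk k := fun k hk => by
    have := hNk k hk
    have : 0 < (L:ℝ) / ε := by positivity
    linarith
  -- The polynomials for layer `k` must be accurate on the range of the approximating network, which
  -- exceeds `[-1, 1]` by the error `k ε / L` accumulated so far.
  have hex : ∀ k, ∀ i : Fin (dims (k + 1)), ∃ p : Polynomial ℝ, k < L →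
      p.natDegree ≤ Nk k ∧
        ∀ t, |t| ≤ 1 + k * (ε / L) → |σ k i t - p.eval t| ≤ (1 + k * (ε / L)) / Nk k := by
    intro k i
    by_cases hk : k < L
    · obtain ⟨p, hp⟩ := jackson_interval (Nk k) (by exact_mod_cast hpos k hk)
        (1 + k * (ε / L)) (by positivity) (σ k i) (hσ_lip k hk i)
      exact ⟨p, fun _ => hp⟩
    · exact ⟨0, fun h => absurd h hk⟩
  choose P hP using hex
  refine ⟨P, fun k hk i => (hP k i hk).1, fun x hx => ?_⟩
  set X := layerRec dims A σ with hX
  set Y := layerRec dims A (fun k i t => (P k i).eval t) with hY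
  have hlip : ∀ k, k < L → ∀ i s t, |σ k i s - σ k i t| ≤ 1 / 6 * |s - t| := by
    intro k hk i s t
    have := (hσ_lip k hk i).dist_le_mul s t
    rw [Real.dist_eq, Real.dist_eq] at this
    push_cast at this
    exact this
  have hXb : ∀ k, k ≤ L → ∀ i, |X k x i| ≤ 1 := by
    intro k
    induction k with
    | zero => exact fun _ i => hx i
    | succ k ih =>
      intro hk i
      have h1 := abs_sum_mul_le (A k i) (X k x) (hA k hk i) 1 zero_le_one (ih (by omega))
      have h2 := hlip k hk i (∑ j, A k i j * X k x j) 0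
      rw [hσ0 k hk, sub_zero, sub_zero] at h2
      change |σ k i (∑ j, A k i j * X k x j)| ≤ 1
      linarith
  have herr : ∀ k, k ≤ L → ∀ i, |X k x i - Y k x i| ≤ k * (ε / L) := by
    intro k
    induction k with
    | zero => intro _ i; simp [hX, hY, layerRec]
    | succ k ih =>
      intro hk i
      have ih' := ih (by omega)
      have hnn : 0 ≤ k * (ε / L) := by positivity
      have hYb : ∀ j, |Y k x j| ≤ 1 + k * (ε / L) := fun j => by
        have h1 := hXb k (by omega) j
        have h2 := ih' j
        rw [abs_le] at *
        constructor <;> linarith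
      set s := ∑ j, A k i j * X k x j with hs
      set t := ∑ j, A k i j * Y k x j with ht
      have ht1 : |t| ≤ 1 + k * (ε / L) :=
        abs_sum_mul_le _ _ (hA k hk i) _ (by positivity) hYb
      have hst : |s - t| ≤ k * (ε / L) := by
        rw [hs, ht, ← sum_sub_distrib]
        simp_rw [← mul_sub]
        exact abs_sum_mul_le _ _ (hA k hk i) _ hnn ih'
      have h1 := hlip k hk i s t
      have h2 := (hP k i hk).2 t ht1
      -- The summand `L - 1` in the lower bound on the degree pays for the enlarged interval.
      have h3 : (1 + k * (ε / L)) / Nk k ≤ ε / L := by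
        rw [div_le_iff₀ (hpos k hk)]
        have hkL : (k:ℝ) ≤ L - 1 := by
          have : ((k + 1 : ℕ):ℝ) ≤ L := by exact_mod_cast hk
          push_cast at this; linarith
        have hq : 0 < ε / L := by positivity
        calc 1 + k * (ε / L) ≤ 1 + (L - 1) * (ε / L) := by gcongr
          _ = ε / L * (L / ε + (L - 1)) := by field_simp
          _ ≤ _ := mul_le_mul_of_nonneg_left (hNk k hk) hq.le
      change |σ k i s - (P k i).eval t| ≤ ((k + 1 : ℕ) : ℝ) * (ε / L)
      have h4 := abs_sub_le (σ k i s) (σ k i t) ((P k i).eval t)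
      push_cast
      linarith
  rw [← sum_sub_distrib]
  calc ‖∑ i, (a i * (X L x i : ℂ) - a i * (Y L x i : ℂ))‖ ≤ ∑ i, ‖a i‖ * ε := by
        refine (norm_sum_le _ _).trans (sum_le_sum fun i _ => ?_)
        rw [← mul_sub, norm_mul, ← Complex.ofReal_sub, Complex.norm_real, Real.norm_eq_abs]
        have := herr L le_rfl i
        rw [mul_div_cancel₀ _ (by positivity)] at this
        exact mul_le_mul_of_nonneg_left this (norm_nonneg _)
    _ ≤ ε := by rw [← sum_mul]; nlinarith
end

section
/- There exists a numerical constant C > 0 with the following property. Let f : ℝ^d → ℂ be an L-hidden-layer network f(x) = (a^{(L+1)})ᵀ x^{(L)}(x), where x^{(0)}(x) = x, x^{(k)}(x) = σ^{(k)}(A^{(k)} x^{(k−1)}(x)) for k ∈ [L], each σ^{(k)} acts component-wise by (1/6)-Lipschitz functions vanishing at 0, each A^{(k)} ∈ ℝ^{d_k × d_{k−1}} satisfies ‖A^{(k)}‖_{∞→∞} ≤ 1 (every row has ℓ¹ norm at most 1), and ‖a^{(L+1)}‖₁ ≤ 1; let d₁ be the width of the first hidden layer. Then for every ε > 0 and every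 integer N ≥ (2^L C (1 + 1/ε²) d₁)^{C L (1 + 1/ε)^{L−1}} there exists a shallow Fourier network f_N with at most N units such that sup_{‖x‖_∞ ≤ 1} |f(x) − f_N(x)| ≤ ε. -/
open Real Finset

/-!
Every intermediate activation is replaced by an algebraic polynomial, and the first layer by a
trigonometric polynomial, so that the whole network becomes a trigonometric polynomial whose
frequencies can be counted.

If `ε ≥ 1/6` the zero network works, because `|f| ≤ 1/6` on the cube. Otherwise let `m = ⌈1/(5ε)⌉`,
so that `2m ≤ 1 + 1/ε`. Jackson's theorem (`jackson`) gives, for a `K`-Lipschitz function on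
`[-r, r]`, a polynomial of degree at most `2m` with error at most `3Kr/m`. It is proved with finite
sums only: the function `g ∘ cos` is averaged at `2m` equispaced nodes against the kernel
`|∑ aₖ e^{ikt}|²` with `a` a tent function. Discrete Parseval (`sum_trigKer`) computes the mass of
the kernel, and also its second moment, since `4 sin²(t/2)` times the kernel is the kernel of the
difference sequence of `a` (`four_sin_sq_mul_trigKer`).

In the first layer the input `t` of a neuron is replaced by `sin(εt)/ε`, which is within `ε²/6` of
`t`, and the activation by a polynomial of degree `6m`; neuron `i` then only uses the `12m + 1`
frequencies `k ε A_i`, `|k| ≤ 6m`. Hence all first-layer neurons lie in the span of the exponentials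
over one set `S` of at most `d₁ (12m + 1)` frequencies. Applying a polynomial of degree at most `2m`
to real combinations of elements of the span over a set `T ∋ 0` lands in the span over the
`2m`-fold sumset of `T`, whatever the width of the layer. After `L` layers the frequencies lie in
the `(2m)^{L-1}`-fold sumset of `S`, of cardinality at most `(d₁ (12m + 1))^{(2m)^{L-1}}`, which is
below the required bound with `C = 7` (`size_bound`). The errors do not accumulate: an activation
contracts the error inherited from the layer below by `1/6`, and Jackson's theorem on `[-1/3, 1/3]`
adds at most `5ε/6` (`exists_layer_approx`).
-/

/-! ### Jackson's theorem for Lipschitz functions -/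

/-- The nonnegative trigonometric polynomial `|∑_{k < M} aₖ e^{ikt}|²`. -/
noncomputable def trigKer (M : ℕ) (a : ℕ → ℝ) (t : ℝ) : ℝ :=
  Complex.normSq (∑ k ∈ range M, (a k : ℂ) * Complex.exp (t * Complex.I) ^ k)

theorem trigKer_nonneg (M : ℕ) (a : ℕ → ℝ) (t : ℝ) : 0 ≤ trigKer M a t :=
  Complex.normSq_nonneg _

theorem trigKer_eq (M : ℕ) (a : ℕ → ℝ) (t : ℝ) :
    trigKer M a t =
      ∑ k ∈ range M, ∑ l ∈ range M, a k * a l * Real.cos ((((k : ℤ) - (l : ℤ) : ℤ) : ℝ) * t) := by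
  have hre : (∑ k ∈ range M, (a k : ℂ) * Complex.exp (t * Complex.I) ^ k).re
      = ∑ k ∈ range M, a k * Real.cos (k * t) := by
    rw [Complex.re_sum]
    refine sum_congr rfl fun k _ => ?_
    rw [← Complex.exp_nat_mul, ← mul_assoc, Complex.re_ofReal_mul,
      show ((k : ℂ) * (t : ℂ)) = ((k * t : ℝ) : ℂ) by push_cast; ring,
      Complex.exp_ofReal_mul_I_re]
  have him : (∑ k ∈ range M, (a k : ℂ) * Complex.exp (t * Complex.I) ^ k).im
      = ∑ k ∈ range M, a k * Real.sin (k * t) := by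
    rw [Complex.im_sum]
    refine sum_congr rfl fun k _ => ?_
    rw [← Complex.exp_nat_mul, ← mul_assoc, Complex.im_ofReal_mul,
      show ((k : ℂ) * (t : ℂ)) = ((k * t : ℝ) : ℂ) by push_cast; ring,
      Complex.exp_ofReal_mul_I_im]
  rw [trigKer, Complex.normSq_apply, hre, him, sum_mul_sum, sum_mul_sum, ← sum_add_distrib]
  refine sum_congr rfl fun k _ => ?_
  rw [← sum_add_distrib]
  refine sum_congr rfl fun l _ => ?_
  push_cast
  rw [sub_mul, Real.cos_sub]
  ring

theorem trigKer_neg (M : ℕ) (a : ℕ → ℝ) (t : ℝ) : trigKer M a (-t) = trigKer M a t := by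
  simp only [trigKer_eq, mul_neg, Real.cos_neg]

/-- Orthogonality on the equispaced nodes `2πj/M`: a geometric sum of a nontrivial `M`-th root of
unity vanishes. -/
theorem sum_cos_nodes {M : ℕ} {p : ℤ} (hp : p ≠ 0) (hpM : |p| < M) (θ : ℝ) :
    ∑ j ∈ range M, Real.cos (p * (θ - 2 * π * j / M)) = 0 := by
  have hM : (M : ℝ) ≠ 0 := by
    have : (0 : ℤ) < M := (abs_nonneg p).trans_lt hpM
    exact_mod_cast this.ne'
  have hMC : (M : ℂ) ≠ 0 := by exact_mod_cast hM
  set w : ℂ := Complex.exp (-(p * (2 * π / M)) * Complex.I) with hw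
  have hwM : w ^ M = 1 := by
    rw [hw, ← Complex.exp_nat_mul, Complex.exp_eq_one_iff]
    refine ⟨-p, ?_⟩
    push_cast
    field_simp
  have hw1 : w ≠ 1 := by
    rw [hw, Ne, Complex.exp_eq_one_iff]
    rintro ⟨n, hn⟩
    have hpi : (2 * π * Complex.I : ℂ) ≠ 0 := Complex.two_pi_I_ne_zero
    have h1 : (-(p : ℂ)) * (2 * π * Complex.I) = (n * M) * (2 * π * Complex.I) := by
      field_simp at hn
      linear_combination (2 * π * Complex.I) * hn
    have h2 : -p = n * M := by exact_mod_cast mul_right_cancel₀ hpi h1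
    have h3 : (M : ℤ) ∣ p := ⟨-n, by linarith⟩
    exact hp (Int.eq_zero_of_abs_lt_dvd h3 hpM)
  have hgeom : ∑ j ∈ range M, w ^ j = 0 := by
    rw [geom_sum_eq hw1, hwM, sub_self, zero_div]
  have h : ∑ j ∈ range M, Complex.exp ((p * (θ - 2 * π * j / M) : ℝ) * Complex.I) = 0 := by
    rw [← mul_zero (Complex.exp (p * θ * Complex.I)), ← hgeom, mul_sum]
    refine sum_congr rfl fun j _ => ?_
    rw [hw, ← Complex.exp_nat_mul, ← Complex.exp_add]
    congr 1
    push_cast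
    ring
  have := congrArg Complex.re h
  simpa only [Complex.re_sum, Complex.exp_ofReal_mul_I_re, Complex.zero_re] using this

/-- Discrete Parseval identity. -/
theorem sum_trigKer (M : ℕ) (a : ℕ → ℝ) (θ : ℝ) :
    ∑ j ∈ range M, trigKer M a (θ - 2 * π * j / M) = M * ∑ k ∈ range M, a k ^ 2 := by
  simp only [trigKer_eq]
  rw [sum_comm, mul_sum]
  refine sum_congr rfl fun k hk => ?_
  rw [sum_comm, sum_eq_single_of_mem k hk]
  · simp only [sub_self, Int.cast_zero, zero_mul, Real.cos_zero, mul_one, sum_const, card_range,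
      nsmul_eq_mul]
    ring
  · intro l hl hlk
    rw [← mul_sum, sum_cos_nodes, mul_zero]
    · omega
    · rw [mem_range] at hk hl
      rw [abs_lt]; omega

/-- Summation by parts: multiplying `∑ aₖ e^{ikt}` by `1 - e^{it}`, whose squared modulus is
`4 sin²(t/2)`, replaces `a` by its differences, without boundary terms since `a` vanishes at both
ends. -/
theorem four_sin_sq_mul_trigKer (M : ℕ) (a : ℕ → ℝ) (h0 : a 0 = 0) (hM : a M = 0) (t : ℝ) :
    4 * Real.sin (t / 2) ^ 2 * trigKer M a t = trigKer M (fun k => a (k + 1) - a k) t := by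
  set z : ℂ := Complex.exp (t * Complex.I) with hz
  have hshift : ∑ k ∈ range M, (a k : ℂ) * z ^ k = z * ∑ k ∈ range M, (a (k + 1) : ℂ) * z ^ k := by
    have h1 := sum_range_succ (fun k => (a k : ℂ) * z ^ k) M
    have h2 := sum_range_succ' (fun k => (a k : ℂ) * z ^ k) M
    simp only [hM, h0, Complex.ofReal_zero, zero_mul, add_zero] at h1 h2
    rw [← h1, h2, mul_sum]
    exact sum_congr rfl fun k _ => by ring
  have hz1 : Complex.normSq z = 1 := by
    rw [Complex.normSq_eq_norm_sq, hz, Complex.norm_exp_ofReal_mul_I, one_pow]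
  have h1z : Complex.normSq (1 - z) = 4 * Real.sin (t / 2) ^ 2 := by
    have hc : Real.cos t = 1 - 2 * Real.sin (t / 2) ^ 2 := by
      rw [show t = 2 * (t / 2) by ring, Real.cos_two_mul, Real.cos_sq']
      ring_nf
    have hs := Real.sin_sq_add_cos_sq t
    rw [Complex.normSq_apply]
    simp only [Complex.sub_re, Complex.sub_im, Complex.one_re, Complex.one_im, hz,
      Complex.exp_ofReal_mul_I_re, Complex.exp_ofReal_mul_I_im]
    linear_combination hs - 2 * hc
  have hdiff : (1 - z) * ∑ k ∈ range M, (a k : ℂ) * z ^ k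
      = z * ∑ k ∈ range M, ((a (k + 1) - a k : ℝ) : ℂ) * z ^ k := by
    rw [sub_mul, one_mul, hshift]
    nth_rewrite 2 [← hshift]
    rw [← mul_sub, ← sum_sub_distrib]
    congr 1
    exact sum_congr rfl fun k _ => by push_cast; ring
  have := congrArg Complex.normSq hdiff
  rw [map_mul, map_mul, hz1, h1z, one_mul] at this
  exact this

/-- The tent function on `{0, …, 2m}` with peak value `m` at `m`. -/
noncomputable def tent (m k : ℕ) : ℝ := min (k : ℝ) (2 * m - k)

theorem le_sum_tent_sq {m : ℕ} (hm : 1 ≤ m) :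
    (m : ℝ) ^ 3 / 3 ≤ ∑ k ∈ range (2 * m), tent m k ^ 2 := by
  have h1 : ∀ n : ℕ, (n : ℝ) ^ 3 / 3 ≤ ∑ k ∈ range (n + 1), (k : ℝ) ^ 2 := by
    intro n
    induction n with
    | zero => simp
    | succ n ih =>
      rw [sum_range_succ]
      push_cast
      nlinarith [(Nat.cast_nonneg n : (0 : ℝ) ≤ n)]
  calc (m : ℝ) ^ 3 / 3 ≤ ∑ k ∈ range (m + 1), (k : ℝ) ^ 2 := h1 m
    _ = ∑ k ∈ range (m + 1), tent m k ^ 2 := by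
      refine sum_congr rfl fun k hk => ?_
      have : (k : ℝ) ≤ m := by exact_mod_cast Nat.lt_succ_iff.1 (mem_range.1 hk)
      rw [tent, min_eq_left (by linarith)]
    _ ≤ _ := by
      refine sum_le_sum_of_subset_of_nonneg ?_ fun _ _ _ => sq_nonneg _
      exact range_subset_range.2 (by omega)

theorem sum_tent_diff_sq_le (m : ℕ) :
    ∑ k ∈ range (2 * m), (tent m (k + 1) - tent m k) ^ 2 ≤ 2 * m := by
  have : ∀ k ∈ range (2 * m), (tent m (k + 1) - tent m k) ^ 2 ≤ 1 := by
    intro k _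
    rw [sq_le_one_iff_abs_le_one, abs_le]
    simp only [tent]
    push_cast
    constructor
    · rcases min_cases (k : ℝ) (2 * m - k) with h | h <;>
      rcases min_cases ((k : ℝ) + 1) (2 * m - (k + 1)) with h' | h' <;> linarith
    · rcases min_cases (k : ℝ) (2 * m - k) with h | h <;>
      rcases min_cases ((k : ℝ) + 1) (2 * m - (k + 1)) with h' | h' <;> linarith
  refine (sum_le_card_nsmul _ _ 1 this).trans ?_
  simp

theorem abs_cos_sub_cos_le (x y : ℝ) : |Real.cos x - Real.cos y| ≤ 2 * |Real.sin ((x - y) / 2)| := by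
  rw [Real.cos_sub_cos, abs_mul, abs_mul]
  have := Real.abs_sin_le_one ((x + y) / 2)
  have h2 : |(-2 : ℝ)| = 2 := by norm_num
  rw [h2]
  nlinarith [abs_nonneg (Real.sin ((x - y) / 2))]

/-- The kernel average of `g ∘ cos` over the nodes, before division by the mass of the kernel,
differs from the mass times `g (cos θ)` by at most `3K/m` times the mass. -/
theorem jackson_mean {m : ℕ} (hm : 1 ≤ m) {g : ℝ → ℝ} {K : ℝ} (hK : 0 ≤ K)
    (hg : ∀ x y, |g x - g y| ≤ K * |x - y|) (θ : ℝ) :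
    |∑ j ∈ range (2 * m), g (Real.cos (2 * π * j / (2 * m : ℕ)))
          * trigKer (2 * m) (tent m) (θ - 2 * π * j / (2 * m : ℕ))
        - (2 * m : ℕ) * (∑ k ∈ range (2 * m), tent m k ^ 2) * g (Real.cos θ)|
      ≤ 3 * K / m * ((2 * m : ℕ) * ∑ k ∈ range (2 * m), tent m k ^ 2) := by
  have hm0 : (0 : ℝ) < m := by exact_mod_cast hm
  set M := 2 * m with hM
  set S := ∑ k ∈ range M, tent m k ^ 2 with hS
  set κ := trigKer M (tent m) with hκ
  have h0 : tent m 0 = 0 := by simp [tent]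
  have hMz : tent m M = 0 := by simp [tent, hM]
  rw [hS, ← sum_trigKer M (tent m) θ, sum_mul, ← sum_sub_distrib, ← hκ]
  -- AM-GM with weight `m / 3` replaces `2|sin|` by the quadratic expression that the
  -- difference identity controls.
  have hterm : ∀ j ∈ range M,
      |g (Real.cos (2 * π * j / M)) * κ (θ - 2 * π * j / M)
          - κ (θ - 2 * π * j / M) * g (Real.cos θ)|
        ≤ K * (m / 6 * trigKer M (fun k => tent m (k + 1) - tent m k) (θ - 2 * π * j / M)
            + 3 / (2 * m) * κ (θ - 2 * π * j / M)) := by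
    intro j _
    set t := θ - 2 * π * j / M with ht
    have hκ0 : 0 ≤ κ t := trigKer_nonneg _ _ _
    rw [← four_sin_sq_mul_trigKer M (tent m) h0 hMz, ← hκ, mul_comm (κ t), ← sub_mul, abs_mul,
      abs_of_nonneg hκ0]
    have h1 : |g (Real.cos (2 * π * j / M)) - g (Real.cos θ)| ≤ K * (2 * |Real.sin (t / 2)|) := by
      rw [abs_sub_comm]
      exact (hg _ _).trans (mul_le_mul_of_nonneg_left (abs_cos_sub_cos_le _ _) hK)
    have h2 : 2 * |Real.sin (t / 2)| ≤ m / 6 * (4 * Real.sin (t / 2) ^ 2) + 3 / (2 * m) := by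
      rw [← sq_abs (Real.sin (t / 2))]
      set s := |Real.sin (t / 2)|
      have h3 : m / 6 * (4 * s ^ 2) + 3 / (2 * m) - 2 * s = (2 * m * s - 3) ^ 2 / (6 * m) := by
        field_simp; ring
      have : 0 ≤ (2 * m * s - 3) ^ 2 / (6 * m) := by positivity
      linarith
    calc _ ≤ K * (2 * |Real.sin (t / 2)|) * κ t := mul_le_mul_of_nonneg_right h1 hκ0
      _ ≤ K * (m / 6 * (4 * Real.sin (t / 2) ^ 2) + 3 / (2 * m)) * κ t := by gcongr
      _ = _ := by ring
  refine (abs_sum_le_sum_abs _ _).trans ((sum_le_sum hterm).trans ?_)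
  rw [← mul_sum, sum_add_distrib, ← mul_sum, ← mul_sum, sum_trigKer, sum_trigKer, ← hS]
  have hd := sum_tent_diff_sq_le m
  have hs := le_sum_tent_sq hm
  rw [← hM] at hd hs
  rw [← hS] at hs
  have hMm : (0 : ℝ) ≤ M := Nat.cast_nonneg _
  have key : m / 6 * (∑ k ∈ range M, (tent m (k + 1) - tent m k) ^ 2) + 3 / (2 * m) * S
      ≤ 3 / m * S := by
    have h1 : m / 6 * (∑ k ∈ range M, (tent m (k + 1) - tent m k) ^ 2) ≤ m / 6 * (2 * m) := by
      gcongr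
    have h2 : (m : ℝ) / 6 * (2 * m) ≤ 1 / m * S := by
      rw [one_div, inv_mul_eq_div, le_div_iff₀ hm0]
      calc (m : ℝ) / 6 * (2 * m) * m = m ^ 3 / 3 := by ring
        _ ≤ S := hs
    have hS0 : 0 ≤ 1 / m * S := by
      have : 0 ≤ S := by rw [hS]; positivity
      positivity
    have h3 : 3 / (2 * m) * S = 3 / 2 * (1 / m * S) := by field_simp
    have h4 : 3 / m * S = 3 * (1 / m * S) := by field_simp
    linarith
  calc _ = K * M * (m / 6 * (∑ k ∈ range M, (tent m (k + 1) - tent m k) ^ 2)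
        + 3 / (2 * m) * S) := by ring
    _ ≤ K * M * (3 / m * S) := by gcongr
    _ = _ := by ring

theorem jackson_one {m : ℕ} (hm : 1 ≤ m) {g : ℝ → ℝ} {K : ℝ} (hK : 0 ≤ K)
    (hg : ∀ x y, |g x - g y| ≤ K * |x - y|) :
    ∃ P : Polynomial ℝ, P.natDegree ≤ 2 * m ∧
      ∀ x : ℝ, |x| ≤ 1 → |P.eval x - g x| ≤ 3 * K / m := by
  have hm0 : (0 : ℝ) < m := by exact_mod_cast hm
  set M := 2 * m with hM
  set S := ∑ k ∈ range M, tent m k ^ 2 with hS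
  have hS0 : 0 < S := lt_of_lt_of_le (by positivity) (le_sum_tent_sq hm)
  have hM0 : (0 : ℝ) < M := by rw [hM]; push_cast; positivity
  let Q : Polynomial ℝ := ∑ j ∈ range M, ∑ k ∈ range M, ∑ l ∈ range M,
    Polynomial.C (g (Real.cos (2 * π * j / M)) * (tent m k * tent m l *
      Real.cos ((((k : ℤ) - (l : ℤ) : ℤ) : ℝ) * (2 * π * j / M)))) *
      Polynomial.Chebyshev.T ℝ ((k : ℤ) - (l : ℤ))
  refine ⟨Polynomial.C ((M * S)⁻¹) * Q, ?_, ?_⟩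
  · refine (Polynomial.natDegree_C_mul_le _ _).trans ?_
    refine Polynomial.natDegree_sum_le_of_forall_le _ _ fun j _ => ?_
    refine Polynomial.natDegree_sum_le_of_forall_le _ _ fun k hk => ?_
    refine Polynomial.natDegree_sum_le_of_forall_le _ _ fun l hl => ?_
    refine (Polynomial.natDegree_C_mul_le _ _).trans ?_
    rw [Polynomial.Chebyshev.natDegree_T]
    rw [mem_range] at hk hl
    omega
  · intro x hx
    obtain ⟨θ, rfl⟩ : ∃ θ, Real.cos θ = x :=
      ⟨Real.arccos x, Real.cos_arccos (abs_le.1 hx).1 (abs_le.1 hx).2⟩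
    have h1 := jackson_mean hm hK hg θ
    have h2 := jackson_mean hm hK hg (-θ)
    rw [Real.cos_neg] at h2
    rw [← hM, ← hS] at h1 h2
    set B := 3 * K / m * (M * S) with hB
    set F : ℝ → ℝ := fun θ => ∑ j ∈ range M, g (Real.cos (2 * π * j / M))
      * trigKer M (tent m) (θ - 2 * π * j / M) with hF
    -- Averaging over `θ` and `-θ` leaves only cosines, hence a polynomial in `cos θ`.
    have hQ : Q.eval (Real.cos θ) = (F θ + F (-θ)) / 2 := by
      simp only [Q, hF, Polynomial.eval_finsetSum, Polynomial.eval_mul, Polynomial.eval_C,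
        Polynomial.Chebyshev.T_real_cos]
      rw [← sum_add_distrib, sum_div]
      refine sum_congr rfl fun j _ => ?_
      rw [← mul_add, trigKer_eq, trigKer_eq, ← sum_add_distrib, mul_sum, sum_div]
      refine sum_congr rfl fun k _ => ?_
      rw [← sum_add_distrib, mul_sum, sum_div]
      refine sum_congr rfl fun l _ => ?_
      generalize (((k : ℤ) - (l : ℤ) : ℤ) : ℝ) = p
      rw [show p * (-θ - 2 * π * j / M) = -(p * θ + p * (2 * π * j / M)) by ring, Real.cos_neg,
        mul_sub, Real.cos_sub, Real.cos_add]
      ring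
    have hMS : 0 < M * S := mul_pos hM0 hS0
    rw [Polynomial.eval_mul, Polynomial.eval_C, hQ]
    have h3 : |(F θ + F (-θ)) / 2 - M * S * g (Real.cos θ)| ≤ B := by
      rw [abs_le] at h1 h2 ⊢
      constructor <;> linarith [h1.1, h1.2, h2.1, h2.2]
    have h4 : (M * S)⁻¹ * ((F θ + F (-θ)) / 2) - g (Real.cos θ)
        = (M * S)⁻¹ * ((F θ + F (-θ)) / 2 - M * S * g (Real.cos θ)) := by
      field_simp
    rw [h4, abs_mul, abs_of_pos (inv_pos.2 hMS), inv_mul_le_iff₀ hMS]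
    linarith

/-- Jackson's theorem: a `K`-Lipschitz function is approximated on `[-r, r]` by polynomials of degree
at most `2m` with error `3Kr/m`. -/
theorem jackson_s18 {m : ℕ} (hm : 1 ≤ m) {g : ℝ → ℝ} {K r : ℝ} (hK : 0 ≤ K) (hr : 0 < r)
    (hg : ∀ x y, |g x - g y| ≤ K * |x - y|) :
    ∃ P : Polynomial ℝ, P.natDegree ≤ 2 * m ∧
      ∀ x : ℝ, |x| ≤ r → |P.eval x - g x| ≤ 3 * (K * r) / m := by
  obtain ⟨P, hP, hPg⟩ := jackson_one hm (g := fun x => g (r * x)) (mul_nonneg hK hr.le)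
    (fun x y => by
      refine (hg _ _).trans (le_of_eq ?_)
      rw [← mul_sub, abs_mul, abs_of_pos hr]; ring)
  refine ⟨P.comp (Polynomial.C r⁻¹ * Polynomial.X), ?_, fun x hx => ?_⟩
  · refine Polynomial.natDegree_comp_le.trans ?_
    have : (Polynomial.C r⁻¹ * Polynomial.X : Polynomial ℝ).natDegree ≤ 1 :=
      (Polynomial.natDegree_C_mul_le _ _).trans Polynomial.natDegree_X_le
    calc _ ≤ P.natDegree * 1 := Nat.mul_le_mul_left _ this
      _ ≤ _ := by omega
  · have h := hPg (r⁻¹ * x) (by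
      rw [abs_mul, abs_of_pos (inv_pos.2 hr), inv_mul_le_iff₀ hr]; linarith)
    simpa [mul_inv_cancel_left₀ hr.ne'] using h

/-! ### Spans of exponentials and sumsets of frequencies -/

open scoped Pointwise

/-- The exponential `x ↦ e^{i v·x}` with frequency `v`. -/
noncomputable def expChar {d : ℕ} (v : Fin d → ℝ) : (Fin d → ℝ) → ℂ :=
  fun x => Complex.exp (Complex.I * (∑ j, v j * x j))

/-- The shallow Fourier networks with frequencies in `S`. -/
noncomputable def fourierSpan {d : ℕ} (S : Finset (Fin d → ℝ)) :
    Submodule ℂ ((Fin d → ℝ) → ℂ) :=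
  Submodule.span ℂ (expChar '' (S : Set (Fin d → ℝ)))

theorem expChar_add {d : ℕ} (v w : Fin d → ℝ) : expChar (v + w) = expChar v * expChar w := by
  funext x
  have h : ∑ j, (v j + w j) * x j = ∑ j, v j * x j + ∑ j, w j * x j := by
    simp only [add_mul, sum_add_distrib]
  simp only [expChar, Pi.mul_apply, Pi.add_apply, h, Complex.ofReal_add, mul_add, Complex.exp_add]

theorem expChar_zero {d : ℕ} : expChar (0 : Fin d → ℝ) = 1 := by
  funext x
  simp [expChar]

theorem expChar_mem {d : ℕ} {S : Finset (Fin d → ℝ)} {v : Fin d → ℝ} (hv : v ∈ S) :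
    expChar v ∈ fourierSpan S :=
  Submodule.subset_span ⟨v, hv, rfl⟩

theorem fourierSpan_mono {d : ℕ} {S T : Finset (Fin d → ℝ)} (h : S ⊆ T) :
    fourierSpan S ≤ fourierSpan T :=
  Submodule.span_mono (Set.image_mono (by exact_mod_cast h))

theorem mul_mem_fourierSpan {d : ℕ} {S T : Finset (Fin d → ℝ)} {g h : (Fin d → ℝ) → ℂ}
    (hg : g ∈ fourierSpan S) (hh : h ∈ fourierSpan T) : g * h ∈ fourierSpan (S + T) := by
  have := Submodule.mul_mem_mul hg hh
  rw [fourierSpan, fourierSpan, Submodule.span_mul_span] at this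
  refine Submodule.span_mono ?_ this
  rintro _ ⟨_, ⟨v, hv, rfl⟩, _, ⟨w, hw, rfl⟩, rfl⟩
  exact ⟨v + w, by exact_mod_cast add_mem_add hv hw, expChar_add v w⟩

theorem pow_mem_fourierSpan {d : ℕ} {S : Finset (Fin d → ℝ)} {g : (Fin d → ℝ) → ℂ}
    (hg : g ∈ fourierSpan S) (n : ℕ) : g ^ n ∈ fourierSpan (n • S) := by
  induction n with
  | zero =>
    rw [pow_zero, zero_nsmul, ← expChar_zero]
    exact expChar_mem (by simp)
  | succ n ih =>
    rw [pow_succ, succ_nsmul]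
    exact mul_mem_fourierSpan ih hg

/-- Substituting `g` into a polynomial of degree at most `n` stays in the span over the `n`-fold
sumset; since `0 ∈ S`, that sumset contains all lower ones. -/
theorem eval_mem_fourierSpan {d n : ℕ} {S : Finset (Fin d → ℝ)} (h0 : 0 ∈ S)
    {P : Polynomial ℝ} (hP : P.natDegree ≤ n) {g : (Fin d → ℝ) → ℝ}
    (hg : (fun x => (g x : ℂ)) ∈ fourierSpan S) :
    (fun x => ((P.eval (g x) : ℝ) : ℂ)) ∈ fourierSpan (n • S) := by
  have h : (fun x => ((P.eval (g x) : ℝ) : ℂ))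
      = ∑ i ∈ range (n + 1), (P.coeff i : ℂ) • (fun x => (g x : ℂ)) ^ i := by
    funext x
    rw [Polynomial.eval_eq_sum_range' (Nat.lt_succ_of_le hP)]
    simp
  rw [h]
  refine Submodule.sum_mem _ fun i hi => Submodule.smul_mem _ _ ?_
  exact fourierSpan_mono
    (Finset.nsmul_subset_nsmul_right h0 (Nat.lt_succ_iff.1 (mem_range.1 hi)))
    (pow_mem_fourierSpan hg i)

theorem sum_mem_fourierSpan {d n : ℕ} {S : Finset (Fin d → ℝ)} (c : Fin n → ℝ)
    {g : Fin n → (Fin d → ℝ) → ℝ} (hg : ∀ j, (fun x => (g j x : ℂ)) ∈ fourierSpan S) :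
    (fun x => ((∑ j, c j * g j x : ℝ) : ℂ)) ∈ fourierSpan S := by
  have h : (fun x => ((∑ j, c j * g j x : ℝ) : ℂ))
      = ∑ j, (c j : ℂ) • (fun x => (g j x : ℂ)) := by
    funext x
    simp
  rw [h]
  exact Submodule.sum_mem _ fun j _ => Submodule.smul_mem _ _ (hg j)

/-- An element of the span over at most `N` frequencies is a network with exactly `N` units, the
superfluous ones having coefficient zero. -/
theorem exists_network_of_mem {d N : ℕ} {S : Finset (Fin d → ℝ)} (hN : S.card ≤ N)
    {g : (Fin d → ℝ) → ℂ} (hg : g ∈ fourierSpan S) :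
    ∃ (b : Fin N → ℂ) (v : Fin N → Fin d → ℝ), ∀ x,
      g x = ∑ k, b k * Complex.exp (Complex.I * (∑ j, v k j * x j)) := by
  obtain ⟨c, hc⟩ := Submodule.mem_span_image_finset_iff_exists_fun ℂ |>.1 hg
  let e : S → Fin N := fun s => Fin.castLE hN (S.equivFin s)
  have he : Function.Injective e := (Fin.castLE_injective hN).comp S.equivFin.injective
  refine ⟨Function.extend e c 0, Function.extend e (fun s => (s : Fin d → ℝ)) 0, fun x => ?_⟩
  have hx : g x = ∑ s : S, c s * expChar (s : Fin d → ℝ) x := by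
    rw [← hc]; simp
  rw [hx]
  refine Fintype.sum_of_injective e he _ _ (fun k hk => ?_) (fun s => ?_)
  · rw [Function.extend_apply' _ _ _ (fun ⟨s, hs⟩ => hk ⟨s, hs⟩)]
    simp
  · rw [he.extend_apply, he.extend_apply]
    rfl

/-- The symmetric arithmetic progression `{k w : |k| ≤ p}`. -/
noncomputable def progression {d : ℕ} (w : Fin d → ℝ) (p : ℕ) : Finset (Fin d → ℝ) :=
  (Icc (-(p : ℤ)) p).image fun k : ℤ => (k : ℝ) • w

theorem card_progression_le {d : ℕ} (w : Fin d → ℝ) (p : ℕ) :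
    (progression w p).card ≤ 2 * p + 1 := by
  refine card_image_le.trans ?_
  rw [Int.card_Icc]
  omega

theorem zero_mem_progression {d : ℕ} (w : Fin d → ℝ) (p : ℕ) : 0 ∈ progression w p :=
  mem_image.2 ⟨0, by simp, by simp⟩

/-- Sumsets of a single progression grow only linearly, so the first layer contributes polynomially
many frequencies. -/
theorem nsmul_progression_subset {d : ℕ} (w : Fin d → ℝ) (n : ℕ) :
    n • progression w 1 ⊆ progression w n := by
  induction n with
  | zero => simpa using zero_mem_progression w 0
  | succ n ih =>
    rw [succ_nsmul]
    refine (add_subset_add_right ih).trans fun u hu => ?_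
    obtain ⟨a, ha, b, hb, rfl⟩ := mem_add.1 hu
    obtain ⟨k, hk, rfl⟩ := mem_image.1 ha
    obtain ⟨l, hl, rfl⟩ := mem_image.1 hb
    rw [mem_Icc] at hk hl
    refine mem_image.2 ⟨k + l, ?_, ?_⟩
    · rw [mem_Icc]; push_cast at *; omega
    · push_cast; rw [add_smul]

theorem sin_div_mem {d : ℕ} (α : Fin d → ℝ) (η : ℝ) :
    (fun x => ((Real.sin (η * ∑ j, α j * x j) / η : ℝ) : ℂ))
      ∈ fourierSpan (progression (η • α) 1) := by
  have h : (fun x => ((Real.sin (η * ∑ j, α j * x j) / η : ℝ) : ℂ))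
      = (Complex.I / (2 * η)) • (expChar (((-1 : ℤ) : ℝ) • η • α) - expChar (((1 : ℤ) : ℝ) • η • α)) := by
    funext x
    simp only [Pi.smul_apply, Pi.sub_apply, expChar, smul_eq_mul]
    push_cast
    have h1 : ∀ s : ℂ, (∑ j, s * ((η : ℂ) * α j) * (x j : ℂ)) = s * (η * ∑ j, (α j : ℂ) * x j) := by
      intro s
      rw [mul_sum, mul_sum]
      exact sum_congr rfl fun j _ => by ring
    rw [h1, h1, Complex.sin]
    ring_nf
  rw [h]
  refine Submodule.smul_mem _ _ (Submodule.sub_mem _ (expChar_mem ?_) (expChar_mem ?_))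
  · exact mem_image.2 ⟨-1, by simp, rfl⟩
  · exact mem_image.2 ⟨1, by simp, rfl⟩

theorem abs_sin_mul_div_sub_le {η t : ℝ} (hη : 0 < η) (hη1 : η ≤ 1) (ht : |t| ≤ 1) :
    |Real.sin (η * t) / η - t| ≤ η := by
  have key : ∀ s : ℝ, 0 ≤ s → s ≤ 1 → |Real.sin (η * s) / η - s| ≤ η := by
    intro s hs hs1
    have h1 : Real.sin (η * s) ≤ η * s := Real.sin_le (by positivity)
    have h2 : η * s - (η * s) ^ 3 / 6 ≤ Real.sin (η * s) := by
      rcases hs.eq_or_lt with rfl | hs0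
      · simp
      · exact (Real.sin_gt_sub_cube (by positivity)).le
    have h3 : (η * s) ^ 3 ≤ η ^ 2 := by
      have hs3 : s ^ 3 ≤ 1 := pow_le_one₀ hs hs1
      calc (η * s) ^ 3 = η ^ 2 * (η * s ^ 3) := by ring
        _ ≤ η ^ 2 * (1 * 1) := by gcongr
        _ = η ^ 2 := by ring
    have h4 : Real.sin (η * s) / η - s = (Real.sin (η * s) - η * s) / η := by field_simp
    rw [h4, abs_div, abs_of_pos hη, div_le_iff₀ hη, abs_le]
    constructor <;> nlinarith
  rcases le_total 0 t with h | h
  · exact key t h (by rwa [abs_of_nonneg h] at ht)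
  · have := key (-t) (by linarith) (by rwa [abs_of_nonpos h] at ht)
    rw [mul_neg, Real.sin_neg, ← abs_neg] at this
    convert this using 2
    ring

theorem abs_sin_mul_div_le {η t : ℝ} (hη : 0 < η) : |Real.sin (η * t) / η| ≤ |t| := by
  rw [abs_div, abs_of_pos hη, div_le_iff₀ hη]
  refine Real.abs_sin_le_abs.trans ?_
  rw [abs_mul, abs_of_pos hη, mul_comm]

/-! ### Propagation through the layers -/

theorem abs_weighted_sum_le {n : ℕ} {c u : Fin n → ℝ} {B : ℝ} (hB : 0 ≤ B)
    (hc : ∑ j, |c j| ≤ 1) (hu : ∀ j, |u j| ≤ B) : |∑ j, c j * u j| ≤ B :=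
  calc |∑ j, c j * u j| ≤ ∑ j, |c j * u j| := abs_sum_le_sum_abs _ _
    _ ≤ ∑ j, |c j| * B := by
      refine sum_le_sum fun j _ => ?_
      rw [abs_mul]
      exact mul_le_mul_of_nonneg_left (hu j) (abs_nonneg _)
    _ = (∑ j, |c j|) * B := by rw [sum_mul]
    _ ≤ 1 * B := by gcongr
    _ = B := one_mul B

theorem norm_weighted_sum_le {n : ℕ} {a z : Fin n → ℂ} {B : ℝ} (hB : 0 ≤ B)
    (ha : ∑ i, ‖a i‖ ≤ 1) (hz : ∀ i, ‖z i‖ ≤ B) : ‖∑ i, a i * z i‖ ≤ B :=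
  calc ‖∑ i, a i * z i‖ ≤ ∑ i, ‖a i * z i‖ := norm_sum_le _ _
    _ ≤ ∑ i, ‖a i‖ * B := by
      refine sum_le_sum fun i _ => ?_
      rw [norm_mul]
      exact mul_le_mul_of_nonneg_left (hz i) (norm_nonneg _)
    _ = (∑ i, ‖a i‖) * B := by rw [sum_mul]
    _ ≤ 1 * B := by gcongr
    _ = B := one_mul B

section Network

variable {L : ℕ} {dims : ℕ → ℕ} {A : (k : ℕ) → Fin (dims (k + 1)) → Fin (dims k) → ℝ}
  {σ : (k : ℕ) → Fin (dims (k + 1)) → ℝ → ℝ}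

theorem abs_layerRec_succ_le
    (hσ : ∀ k, k < L → ∀ i x y, |σ k i x - σ k i y| ≤ 1 / 6 * |x - y|)
    (hσ0 : ∀ k, k < L → ∀ i, σ k i 0 = 0)
    (hA : ∀ k, k < L → ∀ i, ∑ j, |A k i j| ≤ 1)
    {x : Fin (dims 0) → ℝ} (hx : ∀ j, |x j| ≤ 1) :
    ∀ k, k < L → ∀ i, |layerRec dims A σ (k + 1) x i| ≤ 1 / 6 := by
  have hstep : ∀ k, k < L → (∀ j, |layerRec dims A σ k x j| ≤ 1) →
      ∀ i, |layerRec dims A σ (k + 1) x i| ≤ 1 / 6 := by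
    intro k hk h i
    have h1 := hσ k hk i (∑ j, A k i j * layerRec dims A σ k x j) 0
    rw [hσ0 k hk, sub_zero, sub_zero] at h1
    have h2 := abs_weighted_sum_le zero_le_one (hA k hk i) h
    refine h1.trans ?_
    linarith
  intro k
  induction k with
  | zero => exact fun hk => hstep 0 hk hx
  | succ k ih =>
    intro hk
    exact hstep (k + 1) hk fun j => (ih (by omega) j).trans (by norm_num)

/-- The frequencies used by the first layer: multiples `k η A₀ i` with `|k| ≤ p` of the scaled rows of
its weight matrix. -/
noncomputable def baseFreqs (A₀ : Fin (dims 1) → Fin (dims 0) → ℝ) (η : ℝ) (p : ℕ) :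
    Finset (Fin (dims 0) → ℝ) :=
  univ.biUnion fun i => progression (η • A₀ i) p

/-- Layer `k + 1` is uniformly `ε`-close on the cube to real-valued functions, all with frequencies in
the `(2m)^k`-fold sumset of `baseFreqs`. Real values are needed because the next activation is
defined on `ℝ` only. -/
theorem exists_layer_approx
    (hdim : 1 ≤ dims 1)
    (hσ : ∀ k, k < L → ∀ i x y, |σ k i x - σ k i y| ≤ 1 / 6 * |x - y|)
    (hσ0 : ∀ k, k < L → ∀ i, σ k i 0 = 0)
    (hA : ∀ k, k < L → ∀ i, ∑ j, |A k i j| ≤ 1)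
    {ε : ℝ} (hε : 0 < ε) (hε6 : ε ≤ 1 / 6) {m : ℕ} (hm : 1 ≤ m) (hmε : 1 ≤ 5 * ε * m) :
    ∀ k, k < L → ∃ g : Fin (dims (k + 1)) → (Fin (dims 0) → ℝ) → ℝ,
      (∀ i, (fun x => (g i x : ℂ)) ∈
        fourierSpan ((2 * m) ^ k • baseFreqs (A 0) ε (6 * m))) ∧
      ∀ x, (∀ j, |x j| ≤ 1) → ∀ i, |g i x - layerRec dims A σ (k + 1) x i| ≤ ε := by
  have hm0 : (0 : ℝ) < m := by exact_mod_cast hm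
  have h6 : 1 / (6 * m) ≤ 5 / 6 * ε := by
    rw [div_le_iff₀ (by positivity)]; linarith
  intro k
  induction k with
  | zero =>
    intro hk
    choose P hPdeg hP using fun i => jackson_s18 (m := 3 * m) (by omega) (K := 1 / 6) (r := 1)
      (by norm_num) one_pos (hσ 0 hk i)
    refine ⟨fun i x => (P i).eval (Real.sin (ε * ∑ j, A 0 i j * x j) / ε), fun i => ?_,
      fun x hx i => ?_⟩
    · rw [pow_zero, one_nsmul]
      have h1 := eval_mem_fourierSpan (zero_mem_progression _ _)
        ((hPdeg i).trans (show 2 * (3 * m) ≤ 6 * m by omega)) (sin_div_mem (A 0 i) ε)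
      refine fourierSpan_mono ((nsmul_progression_subset _ _).trans ?_) h1
      exact subset_biUnion_of_mem (fun i => progression (ε • A 0 i) (6 * m)) (mem_univ i)
    · have ht := abs_weighted_sum_le zero_le_one (hA 0 hk i) hx
      change |(P i).eval (Real.sin (ε * ∑ j, A 0 i j * x j) / ε)
        - σ 0 i (∑ j, A 0 i j * x j)| ≤ ε
      generalize ∑ j, A 0 i j * x j = t at ht ⊢
      have h1 := hP i (Real.sin (ε * t) / ε) ((abs_sin_mul_div_le hε).trans ht)
      have h2 := hσ 0 hk i (Real.sin (ε * t) / ε) t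
      have h3 := abs_sin_mul_div_sub_le hε (by linarith) ht
      have h4 : 3 * (1 / 6 * 1) / ((3 * m : ℕ) : ℝ) = 1 / (6 * m) := by
        push_cast; field_simp
      rw [h4] at h1
      have h5 := abs_sub_le ((P i).eval (Real.sin (ε * t) / ε)) (σ 0 i (Real.sin (ε * t) / ε))
        (σ 0 i t)
      linarith
  | succ k ih =>
    intro hk
    obtain ⟨g, hg, hgε⟩ := ih (by omega)
    choose P hPdeg hP using fun i => jackson_s18 hm (K := 1 / 6) (r := 1 / 3)
      (by norm_num) (by norm_num) (hσ (k + 1) hk i)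
    refine ⟨fun i x => (P i).eval (∑ j, A (k + 1) i j * g j x), fun i => ?_, fun x hx i => ?_⟩
    · have h0 : (0 : Fin (dims 0) → ℝ) ∈ (2 * m) ^ k • baseFreqs (A 0) ε (6 * m) := by
        refine zero_mem_nsmul ?_
        exact mem_biUnion.2 ⟨⟨0, hdim⟩, mem_univ _, zero_mem_progression _ _⟩
      rw [pow_succ, mul_nsmul]
      exact eval_mem_fourierSpan h0 (hPdeg i) (sum_mem_fourierSpan _ hg)
    · change |(P i).eval (∑ j, A (k + 1) i j * g j x)
        - σ (k + 1) i (∑ j, A (k + 1) i j * layerRec dims A σ (k + 1) x j)| ≤ ε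
      have hy := abs_layerRec_succ_le hσ hσ0 hA hx k (by omega)
      have hyg : |∑ j, A (k + 1) i j * g j x| ≤ 1 / 3 := by
        refine abs_weighted_sum_le (by norm_num) (hA _ hk i) fun j => ?_
        have h1 := hgε x hx j
        have h2 := hy j
        rw [abs_le] at h1 h2 ⊢
        constructor <;> linarith [h1.1, h1.2, h2.1, h2.2]
      have hd : |∑ j, A (k + 1) i j * g j x
          - ∑ j, A (k + 1) i j * layerRec dims A σ (k + 1) x j| ≤ ε := by
        rw [← sum_sub_distrib]
        simp only [← mul_sub]
        exact abs_weighted_sum_le hε.le (hA _ hk i) (hgε x hx)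
      have h1 := hP i _ hyg
      have h2 := hσ (k + 1) hk i (∑ j, A (k + 1) i j * g j x)
        (∑ j, A (k + 1) i j * layerRec dims A σ (k + 1) x j)
      have h4 : 3 * (1 / 6 * (1 / 3)) / (m : ℝ) = 1 / (6 * m) := by
        field_simp
      rw [h4] at h1
      have h5 := abs_sub_le ((P i).eval (∑ j, A (k + 1) i j * g j x))
        (σ (k + 1) i (∑ j, A (k + 1) i j * g j x))
        (σ (k + 1) i (∑ j, A (k + 1) i j * layerRec dims A σ (k + 1) x j))
      linarith

theorem card_baseFreqs_le (A₀ : Fin (dims 1) → Fin (dims 0) → ℝ) (η : ℝ) (p : ℕ) :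
    (baseFreqs A₀ η p).card ≤ dims 1 * (2 * p + 1) := by
  refine (card_biUnion_le_card_mul _ _ (2 * p + 1) fun i _ => card_progression_le _ _).trans ?_
  simp

end Network

/-! ### Counting the units -/

theorem size_bound {L D m : ℕ} (hL : 1 ≤ L) (hD : 1 ≤ D) {ε : ℝ} (hε : 0 < ε)
    (hm : (2 * m : ℝ) ≤ 1 + 1 / ε) :
    (((D * (2 * (6 * m) + 1)) ^ (2 * m) ^ (L - 1) : ℕ) : ℝ) ≤
      ((2 : ℝ) ^ L * 7 * (1 + 1 / ε ^ 2) * (D : ℝ)) ^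
        ((7 : ℝ) * L * (1 + 1 / ε) ^ (L - 1)) := by
  have hD' : (1 : ℝ) ≤ D := by exact_mod_cast hD
  have hL' : (1 : ℝ) ≤ L := by exact_mod_cast hL
  have hy : 0 < 1 / ε := by positivity
  have h2L : (2 : ℝ) ≤ 2 ^ L := by
    calc (2 : ℝ) = 2 ^ 1 := by norm_num
      _ ≤ 2 ^ L := pow_le_pow_right₀ (by norm_num) hL
  set B : ℝ := (2 : ℝ) ^ L * 7 * (1 + 1 / ε ^ 2) * (D : ℝ) with hB
  have hbase : ((D * (2 * (6 * m) + 1) : ℕ) : ℝ) ≤ B := by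
    have h1 : (2 * (6 * m) + 1 : ℝ) ≤ 2 * 7 * (1 + 1 / ε ^ 2) := by
      have : 1 / ε ^ 2 = (1 / ε) ^ 2 := by rw [div_pow, one_pow]
      rw [this]
      nlinarith [sq_nonneg (1 / ε - 1)]
    have h2 : (2 : ℝ) * 7 * (1 + 1 / ε ^ 2) ≤ 2 ^ L * 7 * (1 + 1 / ε ^ 2) := by gcongr
    push_cast
    rw [hB, mul_comm]
    exact mul_le_mul_of_nonneg_right (h1.trans h2) (by linarith)
  have hB1 : 1 ≤ B := by
    refine le_trans ?_ hbase
    exact_mod_cast Nat.mul_pos hD (Nat.succ_pos _)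
  have hexp : (((2 * m) ^ (L - 1) : ℕ) : ℝ) ≤ 7 * L * (1 + 1 / ε) ^ (L - 1) := by
    have h1 : (((2 * m) ^ (L - 1) : ℕ) : ℝ) ≤ (1 + 1 / ε) ^ (L - 1) := by
      push_cast
      gcongr
    have h2 : (0 : ℝ) ≤ (1 + 1 / ε) ^ (L - 1) := by positivity
    nlinarith
  calc (((D * (2 * (6 * m) + 1)) ^ (2 * m) ^ (L - 1) : ℕ) : ℝ)
      = ((D * (2 * (6 * m) + 1) : ℕ) : ℝ) ^ ((2 * m) ^ (L - 1)) := by rw [Nat.cast_pow]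
    _ ≤ B ^ ((2 * m) ^ (L - 1)) := pow_le_pow_left₀ (Nat.cast_nonneg _) hbase _
    _ = B ^ (((2 * m) ^ (L - 1) : ℕ) : ℝ) := (Real.rpow_natCast _ _).symm
    _ ≤ _ := Real.rpow_le_rpow_of_exponent_le hB1 hexp

theorem stmt18 :
    ∃ C : ℝ, 0 < C ∧
      ∀ (L : ℕ), 1 ≤ L → ∀ (dims : ℕ → ℕ), (∀ k, 1 ≤ dims k) →
      ∀ (A : (k : ℕ) → Fin (dims (k + 1)) → Fin (dims k) → ℝ)
        (σ : (k : ℕ) → Fin (dims (k + 1)) → ℝ → ℝ),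
        (∀ k, k < L → ∀ i, LipschitzWith (1 / 6 : NNReal) (σ k i)) →
        (∀ k, k < L → ∀ i, σ k i 0 = 0) →
        (∀ k, k < L → ∀ i, ∑ j, |A k i j| ≤ 1) →
      ∀ a : Fin (dims L) → ℂ, ∑ i, ‖a i‖ ≤ 1 →
      ∀ ε : ℝ, 0 < ε →
      ∀ N : ℕ,
        ((2 : ℝ) ^ L * C * (1 + 1 / ε ^ 2) * (dims 1 : ℝ)) ^
            (C * L * (1 + 1 / ε) ^ (L - 1)) ≤ (N : ℝ) →
        ∃ (b : Fin N → ℂ) (v : Fin N → Fin (dims 0) → ℝ),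
          ∀ x : Fin (dims 0) → ℝ, (∀ j, |x j| ≤ 1) →
            ‖(∑ i, a i * (layerRec dims A σ L x i : ℂ)) -
                ∑ k, b k * Complex.exp (Complex.I * (∑ j, v k j * x j))‖ ≤ ε := by
  refine ⟨7, by norm_num, ?_⟩
  intro L hL dims hdims A σ hLip hσ0 hA a ha ε hε N hN
  have hσ : ∀ k, k < L → ∀ i x y, |σ k i x - σ k i y| ≤ 1 / 6 * |x - y| := by
    intro k hk i x y
    simpa [Real.dist_eq] using (hLip k hk i).dist_le_mul x y
  obtain ⟨l, rfl⟩ : ∃ l, L = l + 1 := ⟨L - 1, by omega⟩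
  rcases le_or_gt (1 / 6) ε with hε6 | hε6
  · -- The network itself is bounded by `1 / 6`, so zero coefficients suffice.
    refine ⟨0, 0, fun x hx => ?_⟩
    simp only [Pi.zero_apply, zero_mul, sum_const_zero, sub_zero]
    refine norm_weighted_sum_le hε.le ha fun i => ?_
    rw [Complex.norm_real, Real.norm_eq_abs]
    exact (abs_layerRec_succ_le hσ hσ0 hA hx l (by omega) i).trans hε6
  · set m := ⌈1 / (5 * ε)⌉₊ with hm
    have hm_ge : 1 / (5 * ε) ≤ m := Nat.le_ceil _
    have hm1 : 1 ≤ m := Nat.ceil_pos.2 (by positivity)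
    have hmε : 1 ≤ 5 * ε * m := by
      rw [div_le_iff₀ (by positivity)] at hm_ge
      linarith
    have hm_le : (2 * m : ℝ) ≤ 1 + 1 / ε := by
      have h1 : (m : ℝ) < 1 / (5 * ε) + 1 := Nat.ceil_lt_add_one (by positivity)
      have h2 : 1 / (5 * ε) = 1 / 5 * (1 / ε) := by field_simp
      have h3 : 6 < 1 / ε := by
        rw [lt_div_iff₀ hε]; linarith
      rw [h2] at h1
      linarith
    obtain ⟨g, hg, hgε⟩ := exists_layer_approx (hdims 1) hσ hσ0 hA hε hε6.le hm1 hmε l (by omega)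
    set S := (2 * m) ^ l • baseFreqs (A 0) ε (6 * m) with hS
    have hcard : S.card ≤ N := by
      have h1 : S.card ≤ (dims 1 * (2 * (6 * m) + 1)) ^ (2 * m) ^ l :=
        card_nsmul_le.trans (Nat.pow_le_pow_left (card_baseFreqs_le _ _ _) _)
      have h2 := size_bound (L := l + 1) hL (hdims 1) hε hm_le
      exact h1.trans (by exact_mod_cast h2.trans hN)
    have hmem : (∑ i, a i • fun x => (g i x : ℂ)) ∈ fourierSpan S :=
      Submodule.sum_mem _ fun i _ => Submodule.smul_mem _ _ (hg i)
    obtain ⟨b, v, hbv⟩ := exists_network_of_mem hcard hmem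
    refine ⟨b, v, fun x hx => ?_⟩
    rw [← hbv x]
    have h1 : (∑ i, a i * (layerRec dims A σ (l + 1) x i : ℂ))
        - (∑ i, a i • fun x => (g i x : ℂ)) x
        = ∑ i, a i * ((layerRec dims A σ (l + 1) x i - g i x : ℝ) : ℂ) := by
      simp [mul_sub]
    rw [h1]
    refine norm_weighted_sum_le hε.le ha fun i => ?_
    rw [Complex.norm_real, Real.norm_eq_abs, abs_sub_comm]
    exact hgε x hx i
end

section
/- There exist numerical constants K > 0 and s ≥ 1 with the following property. Let d ≥ 1, p ≥ 2, w ∈ ℝ^p, U ∈ ℝ^{p×d} with every row of U of Euclidean norm at most 1, let f_{w,U}(x) = exp(i wᵀ (Ux)₊) ((·)₊ the component-wise ReLU), and let X be a centered Gaussian vector on ℝ^d with covariance d^{−1} · Id. Then for every ε ∈ (0,1) and every integer N ≥ [K p (1 + ε^{−s})(1 + ‖w‖₁^s)]^{K (1 + (log p / d)^s)(1 + ε^{−s})(1 + ‖w‖₁^s)} there exists a shallow Fourier network f_N with at most N units such that E[|f_N(X) − f_{w,U}(X)|²] ≤ ε². -/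
/-!
The phase splits as `wᵀ(Ux)₊ = ℓ(x) + ∑ⱼ (wⱼ/2) |uⱼ·x|` with `ℓ` linear, so `exp(iℓ)` is a single
Fourier unit and only the part built from absolute values has to be approximated.

* The `L`-periodic parabola `L (r - r²)`, `r = fract (t/L)`, differs from `|t|` by at most `t²/L` on
  all of `ℝ` (`abs_sub_parabola_le`). Its Fourier series is that of the second Bernoulli polynomial,
  and cutting it after `M` terms costs at most `L/M` (`abs_abs_sub_triM_le`).
* Since `|e^{ia} - e^{ib}|² ≤ 2|a - b|` (`norm_exp_sub_exp_sq_le`), replacing every `|uⱼ·x|` by the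
  trigonometric polynomial costs, in mean square, a multiple of
  `‖w‖₁ (E|X|²/L + L/M) = ‖w‖₁ (1/L + L/M)`: only the second moment `E|X|² = 1` enters
  (`integral_sq_sum`).
* The resulting phase `S` is a Fourier network bounded by `‖w‖₁ L`, and `exp(iS)` is approximated by
  `(1 + iS/D)^D` with error `2S²/D` (`norm_one_add_pow_sub_exp_le`).

Networks form an algebra in which sums add and products multiply the numbers of units, so
`exp(iℓ) (1 + iS/D)^D` has at most `(1 + p(2M+3))^D` units. With `a = 1 + ‖w‖₁`, the choices
`L = 8a/ε²`, `M ≈ L²`, `D ≈ 4a²L²/ε` give mean square error at most `ε²`, and the exponent is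
polynomial in `a` and `1/ε` while the base is `p` times such a polynomial. The bounds are dimension
free: the factor `1 + (log p / d)^s` enters only through being at least `1`.
-/

open MeasureTheory ProbabilityTheory Real Finset

/-! ### The algebra of Fourier networks -/

/-- `FNet n f`: the function `f` is a shallow Fourier network with `n` units. Zero coefficients are
allowed, so this amounts to having at most `n` units. -/
def FNet {d : ℕ} (n : ℕ) (f : (Fin d → ℝ) → ℂ) : Prop :=
  ∃ (b : Fin n → ℂ) (v : Fin n → Fin d → ℝ),
    ∀ x, f x = ∑ k, b k * Complex.exp (Complex.I * ((∑ i, v k i * x i : ℝ) : ℂ))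

/-- Units may be indexed by any finite type with at most `n` elements; the missing ones are padded
with zero coefficients. -/
lemma FNet.of_fintype {d n : ℕ} {ι : Type} [Fintype ι] (hn : Fintype.card ι ≤ n)
    {f : (Fin d → ℝ) → ℂ} (b : ι → ℂ) (v : ι → Fin d → ℝ)
    (h : ∀ x, f x = ∑ k, b k * Complex.exp (Complex.I * ((∑ i, v k i * x i : ℝ) : ℂ))) :
    FNet n f := by
  classical
  have e : ι ↪ Fin n := (Function.Embedding.nonempty_of_card_le (by simpa using hn)).some
  refine ⟨Function.extend e b 0, Function.extend e v 0, fun x => ?_⟩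
  rw [h x]
  refine Fintype.sum_of_injective e e.injective _ _ (fun i hi => ?_) (fun i => ?_)
  · rw [Function.extend_apply' _ _ _ (by simpa using hi)]
    simp
  · simp only [e.injective.extend_apply]

lemma FNet.mono {d m n : ℕ} (hmn : m ≤ n) {f : (Fin d → ℝ) → ℂ} (hf : FNet m f) : FNet n f := by
  obtain ⟨b, v, h⟩ := hf
  exact FNet.of_fintype (by simpa using hmn) b v h

lemma FNet.add {d m n : ℕ} {f g : (Fin d → ℝ) → ℂ} (hf : FNet m f) (hg : FNet n g) :
    FNet (m + n) (fun x => f x + g x) := by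
  obtain ⟨b, v, h⟩ := hf
  obtain ⟨b', v', h'⟩ := hg
  refine FNet.of_fintype (ι := Fin m ⊕ Fin n) (by simp) (Sum.elim b b') (Sum.elim v v') fun x => ?_
  simp [h x, h' x]

lemma FNet.mul {d m n : ℕ} {f g : (Fin d → ℝ) → ℂ} (hf : FNet m f) (hg : FNet n g) :
    FNet (m * n) (fun x => f x * g x) := by
  obtain ⟨b, v, h⟩ := hf
  obtain ⟨b', v', h'⟩ := hg
  refine FNet.of_fintype (ι := Fin m × Fin n) (by simp) (fun q => b q.1 * b' q.2)
    (fun q => v q.1 + v' q.2) fun x => ?_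
  rw [h x, h' x, Finset.sum_mul_sum, ← Finset.sum_product', Finset.univ_product_univ]
  refine Finset.sum_congr rfl fun q _ => ?_
  simp only [Pi.add_apply, add_mul, Finset.sum_add_distrib, Complex.ofReal_add, mul_add,
    Complex.exp_add]
  ring

lemma FNet.exp {d : ℕ} (u : Fin d → ℝ) :
    FNet 1 (fun x => Complex.exp (Complex.I * ((∑ i, u i * x i : ℝ) : ℂ))) :=
  ⟨fun _ => 1, fun _ => u, fun x => by simp⟩

lemma FNet.const {d : ℕ} (c : ℂ) : FNet 1 (fun _ : Fin d → ℝ => c) :=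
  ⟨fun _ => c, fun _ => 0, fun x => by simp⟩

lemma FNet.const_mul {d n : ℕ} (c : ℂ) {f : (Fin d → ℝ) → ℂ} (hf : FNet n f) :
    FNet n (fun x => c * f x) := by
  simpa using (FNet.const c).mul hf

lemma FNet.sum {d n : ℕ} {ι : Type} (s : Finset ι) {f : ι → (Fin d → ℝ) → ℂ}
    (hf : ∀ j, FNet n (f j)) : FNet (s.card * n) (fun x => ∑ j ∈ s, f j x) := by
  classical
  induction s using Finset.induction_on with
  | empty => exact ⟨fun _ => 0, fun _ => 0, fun x => by simp⟩
  | insert a s ha ih =>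
    have := (hf a).add ih
    simp only [Finset.sum_insert ha, Finset.card_insert_of_notMem ha]
    exact this.mono (by ring_nf; rfl)

lemma FNet.pow {d n : ℕ} {f : (Fin d → ℝ) → ℂ} (hf : FNet n f) (k : ℕ) :
    FNet (n ^ k) (fun x => f x ^ k) := by
  induction k with
  | zero => simpa using FNet.const (d := d) 1
  | succ k ih => simpa only [pow_succ] using ih.mul hf

lemma FNet.cos {d : ℕ} (u : Fin d → ℝ) (c : ℝ) :
    FNet 2 (fun x => ((Real.cos (c * ∑ i, u i * x i) : ℝ) : ℂ)) := by
  have h := ((FNet.exp (fun i => c * u i)).add (FNet.exp (fun i => -(c * u i)))).const_mul (1 / 2)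
  have e : ∀ x : Fin d → ℝ, ((Real.cos (c * ∑ i, u i * x i) : ℝ) : ℂ) =
      1 / 2 * (Complex.exp (Complex.I * ((∑ i, c * u i * x i : ℝ) : ℂ)) +
        Complex.exp (Complex.I * ((∑ i, -(c * u i) * x i : ℝ) : ℂ))) := by
    intro x
    have h1 : ∑ i, c * u i * x i = c * ∑ i, u i * x i := by
      rw [Finset.mul_sum]; simp only [mul_assoc]
    have h2 : ∑ i, -(c * u i) * x i = -(c * ∑ i, u i * x i) := by
      rw [← h1, ← Finset.sum_neg_distrib]; simp only [neg_mul]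
    rw [h1, h2, Complex.ofReal_cos, Complex.cos]
    push_cast
    ring_nf
  simp only [e]
  exact h

/-! ### A trigonometric polynomial close to the absolute value -/

/-- The Fourier series of the `L`-periodic parabola `t ↦ L (r - r²)`, `r = fract (t/L)`, cut after
frequency `M`. The summand `n = 0` vanishes because `1 / 0 = 0`. -/
noncomputable def triM (L : ℝ) (M : ℕ) (t : ℝ) : ℝ :=
  L * (1 / 6 - 1 / π ^ 2 * ∑ n ∈ range (M + 1), 1 / (n : ℝ) ^ 2 * Real.cos (2 * π * n / L * t))

lemma abs_sub_parabola_le (y : ℝ) : |(|y| - (Int.fract y - Int.fract y ^ 2))| ≤ y ^ 2 := by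
  have h0 := Int.fract_nonneg y
  have h1 := Int.fract_lt_one y
  rcases lt_or_ge |y| 1 with hy | hy
  · rcases le_or_gt 0 y with h | h
    · rw [abs_of_nonneg h] at hy ⊢
      rw [Int.fract_eq_self.2 ⟨h, hy⟩]
      rw [show y - (y - y ^ 2) = y ^ 2 by ring, abs_of_nonneg (sq_nonneg y)]
    · rw [abs_of_neg h] at hy ⊢
      have : Int.fract y = y + 1 := by
        rw [← Int.fract_add_one, Int.fract_eq_self.2 ⟨by linarith, by linarith⟩]
      rw [this, show -y - (y + 1 - (y + 1) ^ 2) = y ^ 2 by ring, abs_of_nonneg (sq_nonneg y)]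
  · rw [← sq_abs y, abs_le]
    constructor <;> nlinarith [sq_nonneg (Int.fract y - 1 / 2)]

lemma hasSum_cos_div_sq (y : ℝ) :
    HasSum (fun n : ℕ => 1 / (n : ℝ) ^ 2 * Real.cos (2 * π * n * y))
      (π ^ 2 * (Int.fract y ^ 2 - Int.fract y + 1 / 6)) := by
  have h := hasSum_one_div_nat_pow_mul_cos (k := 1) one_ne_zero
    (x := Int.fract y) ⟨Int.fract_nonneg y, (Int.fract_lt_one y).le⟩
  have hb : ((Polynomial.bernoulli 2).map (algebraMap ℚ ℝ)).eval (Int.fract y) =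
      Int.fract y ^ 2 - Int.fract y + 1 / 6 := by
    simp [Polynomial.bernoulli, Finset.sum_range_succ, bernoulli_two, bernoulli_one]
    ring
  convert h using 1
  · funext n
    congr 1
    rw [show 2 * π * n * y = 2 * π * n * Int.fract y + ((n * ⌊y⌋ : ℤ) : ℝ) * (2 * π) by
      push_cast
      linear_combination (-2 * π * n) * Int.fract_add_floor y]
    exact Real.cos_add_int_mul_two_pi _ _
  · rw [show 2 * 1 = 2 from rfl, hb]
    simp only [Nat.factorial]
    push_cast
    ring

lemma sum_range_inv_sq_sub_le (f : ℕ → ℝ) (hf : ∀ n, |f n| ≤ 1) {M M' : ℕ} (h : M + 1 ≤ M') :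
    |∑ n ∈ range M', 1 / (n : ℝ) ^ 2 * f n - ∑ n ∈ range (M + 1), 1 / (n : ℝ) ^ 2 * f n|
      ≤ (2 : ℝ) / ((M : ℝ) + 1) := by
  rw [← Finset.sum_Ico_eq_sub _ h]
  refine (Finset.abs_sum_le_sum_abs _ _).trans ?_
  refine le_trans ?_ (sum_Ioo_inv_sq_le (α := ℝ) M M')
  have : Finset.Ico (M + 1) M' = Finset.Ioo M M' := by ext; simp
  rw [this]
  refine Finset.sum_le_sum fun n _ => ?_
  rw [abs_mul, abs_of_nonneg (by positivity), one_div]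
  exact mul_le_of_le_one_right (by positivity) (hf n)

lemma nine_le_pi_sq : 9 ≤ π ^ 2 := by nlinarith [Real.pi_gt_three]

lemma abs_triM_le {L : ℝ} (hL : 0 < L) (M : ℕ) (t : ℝ) : |triM L M t| ≤ L := by
  have h := sum_range_inv_sq_sub_le (fun n => Real.cos (2 * π * n / L * t))
    (fun n => Real.abs_cos_le_one _) (M := 0) (M' := M + 1) (by omega)
  simp only [zero_add, Finset.sum_range_one, Nat.cast_zero, ne_eq, OfNat.ofNat_ne_zero,
    not_false_eq_true, zero_pow, div_zero, zero_mul, sub_zero, div_one] at h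
  unfold triM
  set A := ∑ n ∈ range (M + 1), 1 / (n : ℝ) ^ 2 * Real.cos (2 * π * n / L * t)
  rw [abs_mul, abs_of_pos hL]
  refine mul_le_of_le_one_right hL.le ?_
  have h9 : 1 / π ^ 2 ≤ 1 / 9 := one_div_le_one_div_of_le (by norm_num) nine_le_pi_sq
  have h2 : |1 / π ^ 2 * A| ≤ 1 / 9 * 2 := by
    rw [abs_mul, abs_of_nonneg (by positivity)]
    exact mul_le_mul h9 h (abs_nonneg _) (by norm_num)
  rw [abs_le] at h2 ⊢
  constructor <;> linarith [h2.1, h2.2]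

/-- The two errors are `t²/L` for the periodic parabola and `L/M` for the tail of its series. -/
lemma abs_abs_sub_triM_le {L : ℝ} (hL : 0 < L) {M : ℕ} (hM : 0 < M) (t : ℝ) :
    |(|t| - triM L M t)| ≤ t ^ 2 / L + L / M := by
  have hM' : (0 : ℝ) < M := by exact_mod_cast hM
  set y := t / L with hy
  have ht : t = L * y := by rw [hy]; field_simp
  set r := Int.fract y
  set A := ∑ n ∈ range (M + 1), 1 / (n : ℝ) ^ 2 * Real.cos (2 * π * n * y) with hA
  have htri : triM L M t = L * (1 / 6 - 1 / π ^ 2 * A) := by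
    unfold triM
    rw [hA]
    congr 3
    refine Finset.sum_congr rfl fun n _ => ?_
    rw [hy]; congr 2; ring
  have htail : |π ^ 2 * (r ^ 2 - r + 1 / 6) - A| ≤ (2 : ℝ) / ((M : ℝ) + 1) := by
    refine le_of_tendsto (((hasSum_cos_div_sq y).tendsto_sum_nat.sub_const A).abs) ?_
    filter_upwards [Filter.eventually_ge_atTop (M + 1)] with M' hM'
    exact sum_range_inv_sq_sub_le _ (fun n => Real.abs_cos_le_one _) hM'
  have hp := abs_sub_parabola_le y
  have hpi : 0 < π ^ 2 := by positivity
  have e : |t| - triM L M t = L * (|y| - (r - r ^ 2)) -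
      L / π ^ 2 * (π ^ 2 * (r ^ 2 - r + 1 / 6) - A) := by
    rw [htri, ht, abs_mul, abs_of_pos hL]
    field_simp
    ring
  rw [e]
  refine (abs_sub _ _).trans (add_le_add ?_ ?_)
  · rw [abs_mul, abs_of_pos hL]
    calc L * |(|y| - (r - r ^ 2))| ≤ L * y ^ 2 := by gcongr
      _ = t ^ 2 / L := by rw [ht]; field_simp
  · rw [abs_mul, abs_of_pos (by positivity)]
    calc L / π ^ 2 * |π ^ 2 * (r ^ 2 - r + 1 / 6) - A| ≤ L / 2 * (2 / (M + 1)) := by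
          gcongr
          linarith [nine_le_pi_sq]
      _ = L / (M + 1) := by field_simp
      _ ≤ L / M := by gcongr; linarith

lemma FNet.triM {d : ℕ} (u : Fin d → ℝ) (L : ℝ) (M : ℕ) :
    FNet (2 * M + 3) (fun x => ((triM L M (∑ i, u i * x i) : ℝ) : ℂ)) := by
  have h := ((FNet.const (d := d) (1 / 6)).add
    ((FNet.sum (range (M + 1)) (fun n : ℕ =>
      (FNet.cos u (2 * π * n / L)).const_mul (1 / (n : ℂ) ^ 2))).const_mul
        (-(1 / (π : ℂ) ^ 2)))).const_mul (L : ℂ)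
  rw [Finset.card_range, show 1 + (M + 1) * 2 = 2 * M + 3 by ring] at h
  convert h using 2 with x
  simp only [_root_.triM]
  push_cast
  ring

/-! ### Complex exponentials -/

lemma norm_exp_sub_exp_le (a b : ℝ) :
    ‖Complex.exp (Complex.I * a) - Complex.exp (Complex.I * b)‖ ≤ |a - b| := by
  have : Complex.exp (Complex.I * a) - Complex.exp (Complex.I * b) =
      Complex.exp (Complex.I * b) * (Complex.exp (Complex.I * ((a - b : ℝ) : ℂ)) - 1) := by
    rw [mul_sub, ← Complex.exp_add, mul_one]
    push_cast
    ring_nf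
  rw [this, norm_mul, Complex.norm_exp_I_mul_ofReal, one_mul]
  exact Real.norm_exp_I_mul_ofReal_sub_one_le

lemma norm_exp_sub_exp_sq_le (a b : ℝ) :
    ‖Complex.exp (Complex.I * a) - Complex.exp (Complex.I * b)‖ ^ 2 ≤ 2 * |a - b| := by
  have h1 := norm_exp_sub_exp_le a b
  have h2 := norm_sub_le (Complex.exp (Complex.I * a)) (Complex.exp (Complex.I * b))
  rw [Complex.norm_exp_I_mul_ofReal, Complex.norm_exp_I_mul_ofReal] at h2
  rw [sq]
  exact mul_le_mul (by linarith) h1 (norm_nonneg _) (by norm_num)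

lemma norm_pow_sub_pow_le {a b : ℂ} {B : ℝ} (ha : ‖a‖ = 1) {D : ℕ}
    (hb : ∀ k ≤ D, ‖b‖ ^ k ≤ B) : ‖a ^ D - b ^ D‖ ≤ D * ‖a - b‖ * B := by
  induction D with
  | zero => simp
  | succ k ih =>
    have e : a ^ (k + 1) - b ^ (k + 1) = a * (a ^ k - b ^ k) + (a - b) * b ^ k := by ring
    rw [e]
    refine (norm_add_le _ _).trans ?_
    rw [norm_mul, norm_mul, ha, one_mul, norm_pow]
    have h1 := ih fun j hj => hb j (by omega)
    have h2 := mul_le_mul_of_nonneg_left (hb k (by omega)) (norm_nonneg (a - b))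
    push_cast
    linarith

/-- Per step, `e^{iS/D}` and `1 + iS/D` differ by at most `(S/D)²`, and the powers of the latter are
bounded by `e^{S²/D} ≤ 2`. -/
lemma norm_one_add_pow_sub_exp_le {S : ℝ} {D : ℕ} (hD : 0 < D) (hS : S ^ 2 / D ≤ 1 / 4) :
    ‖(1 + Complex.I * ((S / D : ℝ) : ℂ)) ^ D - Complex.exp (Complex.I * S)‖ ≤ 2 * (S ^ 2 / D) := by
  have hD' : (1 : ℝ) ≤ D := by exact_mod_cast hD
  have hD0 : (0 : ℝ) < D := by linarith
  set y := S / D with hy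
  have hDy : D * y ^ 2 = S ^ 2 / D := by rw [hy]; field_simp
  have hy2 : y ^ 2 ≤ 1 / 4 := by nlinarith [sq_nonneg y]
  have hyabs : |y| ≤ 1 := by rw [abs_le]; constructor <;> nlinarith
  have hz : ‖Complex.I * (y : ℂ)‖ = |y| := by simp
  have hexp : Complex.exp (Complex.I * S) = Complex.exp (Complex.I * y) ^ D := by
    rw [← Complex.exp_nat_mul, hy]
    congr 1
    push_cast
    have : (D : ℂ) ≠ 0 := by exact_mod_cast hD.ne'
    field_simp
  have h1 : ‖Complex.exp (Complex.I * y) - (1 + Complex.I * y)‖ ≤ y ^ 2 := by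
    have := Complex.norm_exp_sub_one_sub_id_le (x := Complex.I * y) (by rw [hz]; exact hyabs)
    rw [hz, sq_abs] at this
    rwa [← sub_sub]
  have h2 : ‖1 + Complex.I * (y : ℂ)‖ ≤ 1 + y ^ 2 := by
    have hsq : ‖1 + Complex.I * (y : ℂ)‖ ^ 2 = 1 + y ^ 2 := by
      rw [Complex.sq_norm, Complex.normSq_apply]
      simp
      ring
    nlinarith [norm_nonneg (1 + Complex.I * (y : ℂ)), sq_nonneg y]
  have h3 : ∀ k ≤ D, ‖1 + Complex.I * (y : ℂ)‖ ^ k ≤ 2 := by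
    intro k hk
    calc ‖1 + Complex.I * (y : ℂ)‖ ^ k ≤ (1 + y ^ 2) ^ k := by gcongr
      _ ≤ (1 + y ^ 2) ^ D := pow_le_pow_right₀ (by nlinarith [sq_nonneg y]) hk
      _ ≤ Real.exp (y ^ 2) ^ D := by
          gcongr
          linarith [Real.add_one_le_exp (y ^ 2)]
      _ = Real.exp (S ^ 2 / D) := by rw [← Real.exp_nat_mul, hDy]
      _ ≤ Real.exp (1 / 4) := Real.exp_le_exp.2 hS
      _ ≤ 2 := by
          have := Real.exp_bound_div_one_sub_of_interval (x := 1 / 4) (by norm_num) (by norm_num)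
          linarith
  rw [hexp, norm_sub_rev]
  refine (norm_pow_sub_pow_le (Complex.norm_exp_I_mul_ofReal y) h3).trans ?_
  rw [← hDy]
  nlinarith [mul_le_mul_of_nonneg_left h1 hD0.le]

/-! ### The Gaussian second moment -/

lemma integral_sq_sum {d : ℕ} (hd : 1 ≤ d) :
    Integrable (fun x : Fin d → ℝ => ∑ i, x i ^ 2)
      (Measure.pi fun _ : Fin d => gaussianReal 0 (d : NNReal)⁻¹) ∧
    ∫ x : Fin d → ℝ, ∑ i, x i ^ 2
      ∂(Measure.pi fun _ : Fin d => gaussianReal 0 (d : NNReal)⁻¹) = 1 := by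
  have hmem : MemLp (fun x : ℝ => x) 2 (gaussianReal 0 (d : NNReal)⁻¹) :=
    memLp_id_gaussianReal 2
  have hint : ∀ i : Fin d, Integrable (fun x : Fin d → ℝ => x i ^ 2)
      (Measure.pi fun _ : Fin d => gaussianReal 0 (d : NNReal)⁻¹) := fun i =>
    integrable_comp_eval (μ := fun _ : Fin d => gaussianReal 0 (d : NNReal)⁻¹) (i := i)
      (f := fun t : ℝ => t ^ 2) hmem.integrable_sq
  refine ⟨integrable_finsetSum _ fun i _ => hint i, ?_⟩
  rw [integral_finsetSum _ fun i _ => hint i]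
  have hvar : ∫ t : ℝ, t ^ 2 ∂(gaussianReal 0 (d : NNReal)⁻¹) = (d : ℝ)⁻¹ := by
    have h := variance_eq_sub hmem
    rw [variance_fun_id_gaussianReal, integral_id_gaussianReal] at h
    simpa using h.symm
  have h1 : ∀ i : Fin d, ∫ x : Fin d → ℝ, x i ^ 2
      ∂(Measure.pi fun _ : Fin d => gaussianReal 0 (d : NNReal)⁻¹) = (d : ℝ)⁻¹ := fun i => by
    rw [← hvar]
    exact integral_comp_eval (μ := fun _ : Fin d => gaussianReal 0 (d : NNReal)⁻¹) (i := i)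
      (f := fun t : ℝ => t ^ 2) hmem.integrable_sq.aestronglyMeasurable
  have : (d : ℝ) ≠ 0 := by positivity
  simp [h1, this]

/-! ### The approximating network -/

/-- The pointwise error is controlled by `|x|²` alone, uniformly in `d` and `p`. -/
lemma exists_fnet {d p : ℕ} (w : Fin p → ℝ) (U : Fin p → Fin d → ℝ)
    (hU : ∀ j, Real.sqrt (∑ i, U j i ^ 2) ≤ 1) {ε L : ℝ} (hε1 : ε < 1) (hL : 0 < L)
    {M D : ℕ} (hM : 0 < M) (hD : 0 < D) (hDL : ((∑ j, |w j|) * L) ^ 2 / D ≤ ε / 4) :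
    ∃ f : (Fin d → ℝ) → ℂ, FNet ((1 + p * (2 * M + 3)) ^ D) f ∧ ∀ x,
      ‖f x - Complex.exp (Complex.I * ((∑ j, w j * max (∑ i, U j i * x i) 0 : ℝ) : ℂ))‖ ^ 2 ≤
        2 * (∑ j, |w j|) * ((∑ i, x i ^ 2) / L + L / M) + ε ^ 2 / 2 := by
  set W := ∑ j, |w j| with hW
  have hW0 : 0 ≤ W := Finset.sum_nonneg fun _ _ => abs_nonneg _
  set S : (Fin d → ℝ) → ℝ := fun x => ∑ j, w j / 2 * triM L M (∑ i, U j i * x i) with hS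
  set l : (Fin d → ℝ) → ℝ := fun x => ∑ i, (∑ j, w j / 2 * U j i) * x i with hl
  have hlx : ∀ x, l x = ∑ j, w j / 2 * ∑ i, U j i * x i := by
    intro x
    simp only [hl, Finset.sum_mul, Finset.mul_sum]
    rw [Finset.sum_comm]
    simp only [mul_assoc]
  refine ⟨fun x => Complex.exp (Complex.I * (l x : ℂ)) *
    (1 + Complex.I * ((S x / D : ℝ) : ℂ)) ^ D, ?_, fun x => ?_⟩
  · have hSn : FNet (p * (2 * M + 3)) (fun x => ((S x : ℝ) : ℂ)) := by
      have h := FNet.sum (Finset.univ : Finset (Fin p)) fun j =>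
        (FNet.triM (U j) L M).const_mul ((w j : ℂ) / 2)
      rw [Finset.card_univ, Fintype.card_fin] at h
      convert h using 2 with x
      simp [hS]
    have h := (FNet.exp fun i => ∑ j, w j / 2 * U j i).mul
      (((FNet.const 1).add (hSn.const_mul (Complex.I / D))).pow D)
    rw [one_mul] at h
    convert h using 4 with x
    push_cast
    ring
  · set G := ∑ j, w j * max (∑ i, U j i * x i) 0 with hG
    set Q := ∑ i, x i ^ 2 with hQ
    have hSW : |S x| ≤ W * L := by
      refine (Finset.abs_sum_le_sum_abs _ _).trans ?_
      rw [hW, Finset.sum_mul]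
      refine Finset.sum_le_sum fun j _ => ?_
      rw [abs_mul]
      refine mul_le_mul ?_ (abs_triM_le hL M _) (abs_nonneg _) (abs_nonneg _)
      rw [abs_div, abs_two]
      linarith [abs_nonneg (w j)]
    have hS2 : S x ^ 2 / D ≤ ε / 4 := by
      refine le_trans ?_ hDL
      have : S x ^ 2 ≤ (W * L) ^ 2 :=
        sq_le_sq.2 (by rwa [abs_of_nonneg (mul_nonneg hW0 hL.le)])
      gcongr
    have hphase : |l x + S x - G| ≤ W / 2 * (Q / L + L / M) := by
      have e : l x + S x - G = ∑ j, -(w j / 2 *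
          (|∑ i, U j i * x i| - triM L M (∑ i, U j i * x i))) := by
        rw [hlx, hG, ← Finset.sum_add_distrib, ← Finset.sum_sub_distrib]
        refine Finset.sum_congr rfl fun j _ => ?_
        have : max (∑ i, U j i * x i) 0 = ((∑ i, U j i * x i) + |∑ i, U j i * x i|) / 2 := by
          rw [max_def]
          split_ifs with h
          · rw [abs_of_nonpos h]; ring
          · rw [abs_of_pos (not_le.1 h)]; ring
        rw [this]
        ring
      rw [e]
      refine (Finset.abs_sum_le_sum_abs _ _).trans ?_
      rw [hW, Finset.sum_div, Finset.sum_mul]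
      refine Finset.sum_le_sum fun j _ => ?_
      rw [abs_neg, abs_mul, abs_div, abs_two]
      refine mul_le_mul_of_nonneg_left ?_ (by positivity)
      refine (abs_abs_sub_triM_le hL hM _).trans ?_
      gcongr
      refine (Finset.sum_mul_sq_le_sq_mul_sq _ _ _).trans ?_
      refine mul_le_of_le_one_left (Finset.sum_nonneg fun _ _ => sq_nonneg _) ?_
      exact Real.sqrt_le_one.1 (hU j)
    have h1 : ‖Complex.exp (Complex.I * (l x : ℂ)) * (1 + Complex.I * ((S x / D : ℝ) : ℂ)) ^ D -
        Complex.exp (Complex.I * ((l x + S x : ℝ) : ℂ))‖ ≤ ε / 2 := by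
      have e : Complex.exp (Complex.I * ((l x + S x : ℝ) : ℂ)) =
          Complex.exp (Complex.I * (l x : ℂ)) * Complex.exp (Complex.I * (S x : ℂ)) := by
        rw [← Complex.exp_add]; push_cast; ring_nf
      rw [e, ← mul_sub, norm_mul, Complex.norm_exp_I_mul_ofReal, one_mul]
      refine (norm_one_add_pow_sub_exp_le hD (by linarith)).trans ?_
      linarith
    have h2 := norm_exp_sub_exp_sq_le (l x + S x) G
    have h3 := norm_sub_le_norm_sub_add_norm_sub
      (Complex.exp (Complex.I * (l x : ℂ)) * (1 + Complex.I * ((S x / D : ℝ) : ℂ)) ^ D)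
      (Complex.exp (Complex.I * ((l x + S x : ℝ) : ℂ))) (Complex.exp (Complex.I * (G : ℂ)))
    have h0 := norm_nonneg (Complex.exp (Complex.I * (l x : ℂ)) *
      (1 + Complex.I * ((S x / D : ℝ) : ℂ)) ^ D - Complex.exp (Complex.I * ((l x + S x : ℝ) : ℂ)))
    have h4 := pow_le_pow_left₀ (norm_nonneg _) h3 2
    have h5 := pow_le_pow_left₀ h0 h1 2
    have h6 := add_sq_le (a := ‖Complex.exp (Complex.I * (l x : ℂ)) *
      (1 + Complex.I * ((S x / D : ℝ) : ℂ)) ^ D - Complex.exp (Complex.I * ((l x + S x : ℝ) : ℂ))‖)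
      (b := ‖Complex.exp (Complex.I * ((l x + S x : ℝ) : ℂ)) - Complex.exp (Complex.I * (G : ℂ))‖)
    nlinarith

/-- The network size fits: `A` and `E` stand for the factors `1 + ‖w‖₁^s` and `1 + ε^{-s}`, `a` for
`1 + ‖w‖₁`, `e` for `1/ε`, `l` for `(log p / d)^s`. -/
lemma card_le_rpow {p M D : ℕ} {a e A E l : ℝ} (hp : 1 ≤ p) (ha : 1 ≤ a) (he : 1 ≤ e)
    (hA : a ^ 4 ≤ 16 * A) (hE : e ^ 5 ≤ E) (hl : 0 ≤ l)
    (hM : (M : ℝ) ≤ 64 * a ^ 2 * e ^ 4 + 1) (hD : (D : ℝ) ≤ 256 * a ^ 4 * e ^ 5 + 1) :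
    (((1 + p * (2 * M + 3)) ^ D : ℕ) : ℝ) ≤
      (5000 * p * E * A) ^ (5000 * (1 + l) * E * A) := by
  have hp' : (1 : ℝ) ≤ p := by exact_mod_cast hp
  have ha4 : 1 ≤ a ^ 4 := one_le_pow₀ ha
  have he5 : 1 ≤ e ^ 5 := one_le_pow₀ he
  have ha24 : a ^ 2 ≤ a ^ 4 := pow_le_pow_right₀ ha (by norm_num)
  have he45 : e ^ 4 ≤ e ^ 5 := pow_le_pow_right₀ he (by norm_num)
  have hE1 : 1 ≤ E := he5.trans hE
  have hA0 : 0 < A := by linarith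
  have hprod : a ^ 4 * e ^ 5 ≤ 16 * (E * A) := by
    calc a ^ 4 * e ^ 5 ≤ (16 * A) * E := by gcongr
      _ = 16 * (E * A) := by ring
  have hprod1 : 1 ≤ a ^ 4 * e ^ 5 := one_le_mul_of_one_le_of_one_le ha4 he5
  have hM2 : (M : ℝ) ≤ 65 * (a ^ 4 * e ^ 5) := by
    have : a ^ 2 * e ^ 4 ≤ a ^ 4 * e ^ 5 := by gcongr
    linarith
  have hbase : (1 : ℝ) + p * (2 * M + 3) ≤ 5000 * p * E * A := by
    have : (2 * M + 4 : ℝ) ≤ 5000 * (E * A) := by linarith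
    nlinarith [mul_le_mul_of_nonneg_left this (by linarith : (0 : ℝ) ≤ p)]
  have hb1 : (1 : ℝ) ≤ 1 + p * (2 * M + 3) := by
    have : (0 : ℝ) ≤ p * (2 * M + 3) := by positivity
    linarith
  have hexp : (D : ℝ) ≤ 5000 * (1 + l) * E * A := by
    have h0 : 0 ≤ l * (E * A) := by positivity
    nlinarith
  push_cast
  rw [← Real.rpow_natCast]
  calc ((1 : ℝ) + p * (2 * M + 3)) ^ (D : ℝ) ≤ (5000 * p * E * A) ^ (D : ℝ) :=
        Real.rpow_le_rpow (by linarith) hbase (by positivity)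
    _ ≤ _ := Real.rpow_le_rpow_of_exponent_le (hb1.trans hbase) hexp

theorem stmt19 :
    ∃ K : ℝ, 0 < K ∧ ∃ s : ℝ, 1 ≤ s ∧
      ∀ (d p : ℕ), 1 ≤ d → 2 ≤ p →
      ∀ (w : Fin p → ℝ) (U : Fin p → Fin d → ℝ),
        (∀ j, Real.sqrt (∑ i, U j i ^ 2) ≤ 1) →
      ∀ ε : ℝ, 0 < ε → ε < 1 →
      ∀ N : ℕ,
        (K * p * (1 + ε ^ (-s)) * (1 + (∑ j, |w j|) ^ s)) ^
            (K * (1 + (Real.log p / d) ^ s) * (1 + ε ^ (-s)) * (1 + (∑ j, |w j|) ^ s))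
          ≤ (N : ℝ) →
        ∃ (b : Fin N → ℂ) (v : Fin N → Fin d → ℝ),
          ∫ x : Fin d → ℝ,
              ‖(∑ k, b k * Complex.exp (Complex.I * (∑ i, v k i * x i))) -
                  Complex.exp (Complex.I * (∑ j, w j * max (∑ i, U j i * x i) 0))‖ ^ 2
            ∂(Measure.pi fun _ : Fin d => gaussianReal 0 (d : NNReal)⁻¹) ≤ ε ^ 2 := by
  refine ⟨5000, by norm_num, 5, by norm_num, ?_⟩
  intro d p hd hp w U hU ε hε hε1 N hN
  set W := ∑ j, |w j| with hW
  have hW0 : 0 ≤ W := Finset.sum_nonneg fun _ _ => abs_nonneg _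
  set a := 1 + W with ha
  have ha1 : 1 ≤ a := by linarith
  set L := 8 * a / ε ^ 2 with hL
  have hL0 : 0 < L := by positivity
  set M := ⌈L ^ 2⌉₊ with hM
  have hM0 : 0 < M := Nat.ceil_pos.2 (by positivity)
  have hM0' : (0 : ℝ) < M := by exact_mod_cast hM0
  set D := ⌈4 * (a * L) ^ 2 / ε⌉₊ with hD
  have hD0 : 0 < D := Nat.ceil_pos.2 (by positivity)
  have hD0' : (0 : ℝ) < D := by exact_mod_cast hD0
  have hDL : (W * L) ^ 2 / D ≤ ε / 4 := by
    have h1 : 4 * (a * L) ^ 2 / ε ≤ D := Nat.le_ceil _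
    have h2 : (W * L) ^ 2 ≤ (a * L) ^ 2 := by
      gcongr
      linarith
    rw [div_le_iff₀ hε] at h1
    rw [div_le_iff₀ hD0']
    linarith
  obtain ⟨f, hf, hfx⟩ := exists_fnet w U hU hε1 hL0 hM0 hD0 hDL
  have he1 : 1 ≤ 1 / ε := by rw [le_div_iff₀ hε]; linarith
  have hεs : ε ^ (-5 : ℝ) = (1 / ε) ^ 5 := by
    rw [Real.rpow_neg hε.le, one_div, inv_pow]
    norm_cast
  have hWs : W ^ (5 : ℝ) = W ^ 5 := by norm_cast
  have hcard : (((1 + p * (2 * M + 3)) ^ D : ℕ) : ℝ) ≤ N := by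
    refine le_trans (card_le_rpow (a := a) (e := 1 / ε) (by omega) ha1 he1 ?_ ?_ ?_ ?_ ?_) hN
    · rw [hWs]
      rcases le_total W 1 with h | h
      · have h1 : a ^ 4 ≤ 2 ^ 4 := pow_le_pow_left₀ (by linarith) (by linarith) 4
        have : 0 ≤ W ^ 5 := by positivity
        linarith
      · have h1 : a ^ 4 ≤ (2 * W) ^ 4 := pow_le_pow_left₀ (by linarith) (by linarith) 4
        have h2 : W ^ 4 ≤ W ^ 5 := pow_le_pow_right₀ h (by norm_num)
        rw [mul_pow] at h1
        linarith
    · rw [hεs]; linarith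
    · exact Real.rpow_nonneg (div_nonneg (Real.log_natCast_nonneg p) (Nat.cast_nonneg d)) _
    · refine (Nat.ceil_lt_add_one (by positivity)).le.trans (le_of_eq ?_)
      rw [hL]; field_simp; ring
    · refine (Nat.ceil_lt_add_one (by positivity)).le.trans (le_of_eq ?_)
      rw [hL]; field_simp; ring
  obtain ⟨b, v, hbv⟩ := hf.mono (by exact_mod_cast hcard)
  refine ⟨b, v, ?_⟩
  obtain ⟨hint, hone⟩ := integral_sq_sum hd
  have hLM : L / M ≤ 1 / L := by
    have : L ^ 2 ≤ M := Nat.le_ceil _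
    rw [div_le_div_iff₀ hM0' hL0]
    linarith
  have hWL : W * (1 / L) ≤ ε ^ 2 / 8 := by
    rw [hL]
    have : W * (1 / (8 * a / ε ^ 2)) = (W / a) * (ε ^ 2 / 8) := by field_simp
    rw [this]
    refine mul_le_of_le_one_left (by positivity) ?_
    rw [div_le_one (by linarith)]
    linarith
  have hsum : Integrable (fun x : Fin d → ℝ => (∑ i, x i ^ 2) / L + L / M)
      (Measure.pi fun _ : Fin d => gaussianReal 0 (d : NNReal)⁻¹) :=
    (hint.div_const L).add (integrable_const _)
  have hgint : Integrable (fun x : Fin d → ℝ =>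
      2 * W * ((∑ i, x i ^ 2) / L + L / M) + ε ^ 2 / 2)
      (Measure.pi fun _ : Fin d => gaussianReal 0 (d : NNReal)⁻¹) :=
    (hsum.const_mul _).add (integrable_const _)
  refine (integral_mono_of_nonneg (Filter.Eventually.of_forall fun x => by positivity) hgint
    (Filter.Eventually.of_forall fun x => ?_)).trans ?_
  · have := hfx x
    rw [hbv x] at this
    exact this
  · rw [integral_add (hsum.const_mul _) (integrable_const _), integral_const_mul, integral_add (hint.div_const L)
      (integrable_const _), integral_div, hone]
    simp only [integral_const, probReal_univ, one_smul]
    have := mul_le_mul_of_nonneg_left hLM hW0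
    linarith
end
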